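/- Let A = ⊕_{n≥0} A_n be a nonnegatively graded associative algebra over a field of characteristic 0, and let D : A → A be the grading derivation D(a) = n·a for a ∈ A_n. Then the inclusion A₀ → A induces an isomorphism on periodic cyclic homology HP_•(A₀) ≅ HP_•(A). -/

import Mathlib

open scoped TensorProduct
open Finset

section CyclicComplex

variable (k A : Type*) [CommRing k] [Ring A] [Algebra k A]

/-- The cyclic chain group `C_n(A) = A₊ ⊗ A^{⊗n}` over `k`. -/
abbrev CycChain (n : ℕ) : Type _ :=
  Unitization k A ⊗[k] (PiTensorProduct k (fun _ : Fin n => A))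

/-- The elementary chain `a₀ ⊗ f 0 ⊗ ⋯ ⊗ f (n-1)` in `C_n(A)`. -/
noncomputable def elemC (n : ℕ) (a₀ : Unitization k A) (f : ℕ → A) : CycChain k A n :=
  a₀ ⊗ₜ[k] PiTensorProduct.tprod k (fun i : Fin n => f (i : ℕ))

/-- The value of the Hochschild boundary `b` on the elementary chain
`a₀ ⊗ f 0 ⊗ ⋯ ⊗ f n` of degree `n+1`. -/
noncomputable def bElemF (n : ℕ) (a₀ : Unitization k A) (f : ℕ → A) : CycChain k A n :=
  elemC k A n (a₀ * Unitization.inr (f 0)) (fun i => f (i + 1))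
  + ∑ j ∈ Finset.range n, ((-1 : ℤ) ^ (j + 1)) •
      elemC k A n a₀
        (fun i => if i < j then f i else if i = j then f j * f (j + 1) else f (i + 1))
  + ((-1 : ℤ) ^ (n + 1)) • elemC k A n (Unitization.inr (f n) * a₀) f

/-- The value of the Connes operator `B` on the elementary chain
`a₀ ⊗ f 0 ⊗ ⋯ ⊗ f (n-1)` of degree `n` (using the `A`-component of `a₀`; `B` vanishes on
chains starting with `e`). -/
noncomputable def BElemF (n : ℕ) (a₀ : Unitization k A) (f : ℕ → A) : CycChain k A (n + 1) :=
  ∑ j ∈ Finset.range (n + 1), ((-1 : ℤ) ^ (j * n)) •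
    elemC k A (n + 1) 1
      (fun i => (fun m => if m = 0 then a₀.snd else f (m - 1)) ((j + i) % (n + 1)))

variable {k A}

/-- The even-to-odd differential `b + B` of the periodic cyclic complex
`C_even(A) = Π_n C_{2n}(A) → C_odd(A) = Π_n C_{2n+1}(A)`. -/
noncomputable def dEO
    (bop : ∀ n : ℕ, CycChain k A (n + 1) →ₗ[k] CycChain k A n)
    (Bop : ∀ n : ℕ, CycChain k A n →ₗ[k] CycChain k A (n + 1))
    (x : ∀ n : ℕ, CycChain k A (2 * n)) : ∀ n : ℕ, CycChain k A (2 * n + 1) :=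
  fun n => bop (2 * n + 1) (x (n + 1)) + Bop (2 * n) (x n)

/-- The odd-to-even differential `b + B` of the periodic cyclic complex. -/
noncomputable def dOE
    (bop : ∀ n : ℕ, CycChain k A (n + 1) →ₗ[k] CycChain k A n)
    (Bop : ∀ n : ℕ, CycChain k A n →ₗ[k] CycChain k A (n + 1))
    (y : ∀ n : ℕ, CycChain k A (2 * n + 1)) : ∀ n : ℕ, CycChain k A (2 * n) :=
  fun n => match n with
  | 0 => bop 0 (y 0)
  | (m + 1) => bop (2 * (m + 1)) (y (m + 1))
      + (show CycChain k A (2 * (m + 1)) from Bop (2 * m + 1) (y m))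

end CyclicComplex

/-- The degree-zero part of a graded algebra, as a subalgebra. -/
def degZeroSubalgebra {k A : Type*} [CommRing k] [Ring A] [Algebra k A]
    (𝒜 : ℕ → Submodule k A) [GradedAlgebra 𝒜] : Subalgebra k A where
  carrier := 𝒜 0
  mul_mem' := fun {a b} ha hb => by
    have h := SetLike.mul_mem_graded ha hb
    simpa using h
  one_mem' := SetLike.one_mem_graded 𝒜
  add_mem' := fun {a b} ha hb => (𝒜 0).add_mem ha hb
  zero_mem' := (𝒜 0).zero_mem
  algebraMap_mem' := fun r => by
    have h := (𝒜 0).smul_mem r (SetLike.one_mem_graded 𝒜)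
    simpa [Algebra.algebraMap_eq_smul_one] using h

/-- The map `Unitization k A₀ → Unitization k A` induced by the inclusion of a subalgebra. -/
noncomputable def unitizationIncl {k A : Type*} [CommRing k] [Ring A] [Algebra k A]
    (S : Subalgebra k A) (x : Unitization k S) : Unitization k A :=
  Unitization.inl x.fst + Unitization.inr (x.snd : A)


/-
For any derivation `D` of `A` the Cartan homotopy formula `[b + B, e_D + S_D] = L_D` shows that the
Lie derivative `L_D` is null-homotopic on the periodic cyclic complex. Let `D` be the grading
derivation. Then `L_D` multiplies a chain with entries homogeneous of degrees `d₀, …, d_n` by the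
total degree `d₀ + ⋯ + d_n`. As degrees are nonnegative, the projection `A → A₀` is a homomorphism
and makes the complex of `A₀` a retract of that of `A`, with a complement spanned in each `C_n` by
chains of positive total degree. There `L_D` is bijective in characteristic `0`, so the complement
is acyclic. Bijectivity is inherited by the products defining the periodic complex.
-/

namespace CycChain

section Sequences

/-- The sequence `g j, …, g (N - 1), g 0, …, g (j - 1)`: the cyclic rotation by `j ≤ N` of the
first `N` entries of `g`. Later entries are irrelevant. -/
def rotate {α : Type*} (N j : ℕ) (g : ℕ → α) : ℕ → α :=
  fun i => if j + i < N then g (j + i) else g (j + i - N)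

theorem apply_add_mod {α : Type*} {N j i : ℕ} (hj : j ≤ N) (hi : i < N) (g : ℕ → α) :
    g ((j + i) % N) = rotate N j g i := by
  unfold rotate
  split_ifs with h
  · rw [Nat.mod_eq_of_lt h]
  · rw [Nat.mod_eq_sub_mod (by omega), Nat.mod_eq_of_lt (by omega)]

theorem rotate_self {α : Type*} (N : ℕ) (g : ℕ → α) : rotate N N g = g := by
  funext i
  simp [rotate]

theorem rotate_zero_apply {α : Type*} {N i : ℕ} (hi : i < N) (g : ℕ → α) :
    rotate N 0 g i = g i := by
  simp [rotate, hi]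

theorem rotate_rotate_succ {α : Type*} {n j : ℕ} (hj : j ≤ n) (g : ℕ → α) :
    rotate (n + 1) n (rotate (n + 1) (j + 1) g) = rotate (n + 1) j g := by
  funext i
  unfold rotate
  split_ifs <;> first | omega | (congr 1; omega)

theorem rotate_succ_rotate {α : Type*} (n j : ℕ) (g : ℕ → α) :
    rotate (n + 1) (j + 1) (rotate (n + 1) n g) = rotate (n + 1) j g := by
  funext i
  unfold rotate
  split_ifs <;> first | omega | (congr 1; omega)

theorem sum_rotate {M : Type*} [AddCommMonoid M] {N j : ℕ} (hj : j ≤ N) (g : ℕ → M) :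
    ∑ l ∈ range N, rotate N j g l = ∑ l ∈ range N, g l := by
  induction j with
  | zero => exact sum_congr rfl fun l hl => rotate_zero_apply (mem_range.mp hl) g
  | succ j ih =>
    rw [← ih (by omega)]
    obtain ⟨M, rfl⟩ : ∃ M, N = M + 1 := ⟨N - 1, by omega⟩
    rw [sum_range_succ, sum_range_succ' _ M]
    congr 1
    · refine sum_congr rfl fun l _ => ?_
      simp only [rotate, show j + 1 + l = j + (l + 1) by omega]
    · simp only [rotate, show ¬ j + 1 + M < M + 1 by omega, show j + 0 < M + 1 by omega,
        if_true, if_false, show j + 1 + M - (M + 1) = j + 0 by omega]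

section Mul
variable {A : Type*} [Mul A]

/-- The sequence `g 0, …, g q * g (q + 1), g (q + 2), …`. -/
def mulAt (q : ℕ) (g : ℕ → A) : ℕ → A :=
  fun i => if i < q then g i else if i = q then g q * g (q + 1) else g (i + 1)

/-- The sequence `g N * g 0, g 1, g 2, …`: the last of the entries `g 0, …, g N` is multiplied into
the first one. -/
def cyclicMul (N : ℕ) (g : ℕ → A) : ℕ → A := Function.update g 0 (g N * g 0)

/-- The `q`-th cyclic face of the sequence `g 0, …, g N`: for `q < N` multiply the neighbours in
positions `q` and `q + 1`; every `q ≥ N` stands for the last, cyclic, face. -/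
def face (N q : ℕ) (g : ℕ → A) : ℕ → A :=
  if q < N then mulAt q g else cyclicMul N g

theorem mulAt_rotate_of_add_le {N J p i : ℕ} (h : J + p ≤ N) (hJ : 1 ≤ J) (hi : i < N)
    (g : ℕ → A) : mulAt p (rotate (N + 1) J g) i = rotate N J (face N (J + p) g) i := by
  unfold face
  split_ifs with hN <;> simp only [mulAt, cyclicMul, rotate, Function.update_apply] <;>
    split_ifs <;> first | omega | (congr 1 <;> omega) | (congr 2 <;> omega)

theorem mulAt_rotate_of_lt_add {N J p i : ℕ} (h : N < J + p) (hJ : J ≤ N + 1) (hp : p < N)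
    (hi : i < N) (g : ℕ → A) :
    mulAt p (rotate (N + 1) J g) i = rotate N (J - 1) (face N (J + p - N - 1) g) i := by
  rw [face, if_pos (by omega)]
  simp only [mulAt, rotate]
  split_ifs <;> first | omega | (congr 1; omega) | (congr 2; omega)

end Mul

theorem mulAt_zero_face {A : Type*} [Semigroup A] {N : ℕ} (hN : 0 < N) (q : ℕ) (g : ℕ → A) :
    mulAt 0 (face (N + 1) (q + 1) g) = face N q (mulAt 0 g) := by
  funext i
  unfold face
  split_ifs with h h' h'
  · rcases Nat.eq_zero_or_pos i with rfl | hi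
    · rcases Nat.eq_zero_or_pos q with rfl | hq
      · simp [mulAt, mul_assoc]
      · simp [mulAt, hq]
    · simp only [mulAt]
      split_ifs <;> first | contradiction | omega | rfl
  · omega
  · omega
  · rcases Nat.eq_zero_or_pos i with rfl | hi
    · simp [mulAt, cyclicMul, mul_assoc, hN.ne']
    · simp [mulAt, cyclicMul, hi.ne']

end Sequences

section Leibniz

/-- The Leibniz rule. Mathlib's `Derivation` is not available, as it needs a commutative algebra. -/
def IsLeibniz {A : Type*} [Mul A] [Add A] (D : A → A) : Prop :=
  ∀ a b, D (a * b) = D a * b + a * D b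

/-- The sequence `g` with `D` applied to its entry in position `l`. -/
def derivAt {A : Type*} (D : A → A) (l : ℕ) (g : ℕ → A) : ℕ → A := Function.update g l (D (g l))

/-- The function `Φ` of a sequence is additive in the entry in position `q`. -/
def SlotAdditive {A M : Type*} [Add A] [Add M] (Φ : (ℕ → A) → M) (q : ℕ) : Prop :=
  ∀ g x y, Φ (Function.update g q (x + y)) = Φ (Function.update g q x) + Φ (Function.update g q y)

theorem SlotAdditive.map_update_nsmul {A M : Type*} [AddMonoid A] [AddGroup M] {Φ : (ℕ → A) → M}
    {q : ℕ} (hΦ : SlotAdditive Φ q) (m : ℕ) (g : ℕ → A) (x : A) :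
    Φ (Function.update g q (m • x)) = m • Φ (Function.update g q x) :=
  map_nsmul (AddMonoidHom.mk' (fun x => Φ (Function.update g q x)) (hΦ g)) m x

theorem SlotAdditive.eq_zero {A M : Type*} [AddMonoid A] [AddGroup M] {Φ : (ℕ → A) → M} {q : ℕ}
    (hΦ : SlotAdditive Φ q) {g : ℕ → A} (hg : g q = 0) : Φ g = 0 := by
  simpa [← hg] using hΦ.map_update_nsmul 0 g 0

theorem derivAt_rotate {A : Type*} (D : A → A) {N l i : ℕ} (j : ℕ) (hl : l < N) (hi : i < N)
    (g : ℕ → A) :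
    derivAt D l (rotate N j g) i =
      rotate N j (derivAt D (if j + l < N then j + l else j + l - N) g) i := by
  simp only [derivAt, rotate, Function.update_apply]
  split_ifs <;> first | omega | rfl

theorem sum_derivAt_rotate {A M : Type*} [AddCommMonoid M] {D : A → A} {Φ : (ℕ → A) → M} {N j : ℕ}
    (hΦ : DependsOn Φ (Set.Iio N)) (hj : j ≤ N) (g : ℕ → A) :
    ∑ l ∈ range N, Φ (derivAt D l (rotate N j g)) =
      ∑ l ∈ range N, Φ (rotate N j (derivAt D l g)) := by
  rw [← sum_rotate hj fun l => Φ (rotate N j (derivAt D l g))]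
  refine sum_congr rfl fun l hl => ?_
  rw [hΦ fun i hi => derivAt_rotate D j (mem_range.mp hl) hi g]
  unfold rotate
  split_ifs <;> rfl

variable {A M : Type*} [NonUnitalNonAssocRing A] [AddCommMonoid M] {D : A → A} {Φ : (ℕ → A) → M}
  {N q l : ℕ}

theorem derivAt_mulAt_of_lt (h : l < q) (g : ℕ → A) :
    derivAt D l (mulAt q g) = mulAt q (derivAt D l g) := by
  funext i
  simp only [derivAt, mulAt, Function.update_apply]
  split_ifs <;> first | omega | rfl

theorem derivAt_mulAt_of_gt (h : q < l) (g : ℕ → A) :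
    derivAt D l (mulAt q g) = mulAt q (derivAt D (l + 1) g) := by
  funext i
  simp only [derivAt, mulAt, Function.update_apply]
  split_ifs <;> first | omega | rfl

theorem SlotAdditive.derivAt_mulAt (hΦ : SlotAdditive Φ q) (hD : IsLeibniz D) (g : ℕ → A) :
    Φ (derivAt D q (mulAt q g)) =
      Φ (mulAt q (derivAt D q g)) + Φ (mulAt q (derivAt D (q + 1) g)) := by
  have left : mulAt q (derivAt D q g) = Function.update (mulAt q g) q (D (g q) * g (q + 1)) := by
    funext i
    simp only [derivAt, mulAt, Function.update_apply]
    split_ifs <;> first | omega | rfl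
  have right : mulAt q (derivAt D (q + 1) g) =
      Function.update (mulAt q g) q (g q * D (g (q + 1))) := by
    funext i
    simp only [derivAt, mulAt, Function.update_apply]
    split_ifs <;> first | omega | rfl
  have middle : mulAt q g q = g q * g (q + 1) := by simp [mulAt]
  rw [left, right, ← hΦ, derivAt, middle, hD]

theorem sum_derivAt_mulAt (hΦ : SlotAdditive Φ q) (hD : IsLeibniz D) (N : ℕ) (g : ℕ → A) :
    ∑ l ∈ range N, Φ (derivAt D l (mulAt q g)) =
      ∑ l ∈ range (if q < N then N + 1 else N), Φ (mulAt q (derivAt D l g)) := by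
  induction N with
  | zero => simp
  | succ N ih =>
    rw [sum_range_succ, ih]
    rcases lt_trichotomy q N with h | rfl | h
    · rw [derivAt_mulAt_of_gt h, if_pos h, if_pos (by omega), sum_range_succ _ (N + 1)]
    · rw [hΦ.derivAt_mulAt hD, if_neg (by omega), if_pos (by omega), sum_range_succ _ (q + 1),
        sum_range_succ, add_assoc]
    · rw [derivAt_mulAt_of_lt h, if_neg (by omega), if_neg (by omega), sum_range_succ]

theorem derivAt_cyclicMul (h0 : l ≠ 0) (hl : l ≠ N) (g : ℕ → A) :
    derivAt D l (cyclicMul N g) = cyclicMul N (derivAt D l g) := by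
  simp only [derivAt, cyclicMul, Function.update_of_ne h0, Function.update_of_ne hl.symm,
    Function.update_of_ne h0.symm, Function.update_comm h0]

theorem SlotAdditive.derivAt_cyclicMul (hΦ : SlotAdditive Φ 0) (hΦN : DependsOn Φ (Set.Iio N))
    (hD : IsLeibniz D) (hN : N ≠ 0) (g : ℕ → A) :
    Φ (derivAt D 0 (cyclicMul N g)) =
      Φ (cyclicMul N (derivAt D 0 g)) + Φ (cyclicMul N (derivAt D N g)) := by
  have first : cyclicMul N (derivAt D 0 g) = Function.update g 0 (g N * D (g 0)) := by
    simp [cyclicMul, derivAt, hN]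
  have last : Φ (cyclicMul N (derivAt D N g)) = Φ (Function.update g 0 (D (g N) * g 0)) :=
    hΦN fun i (hi : i < N) => by simp [cyclicMul, derivAt, Function.update_apply, hi.ne, hN.symm]
  rw [first, last, add_comm, ← hΦ, derivAt, cyclicMul, Function.update_self, Function.update_idem,
    hD]

theorem sum_derivAt_face (hΦ : ∀ i < N, SlotAdditive Φ i) (hΦN : DependsOn Φ (Set.Iio N))
    (hD : IsLeibniz D) (hN : 0 < N) (q : ℕ) (g : ℕ → A) :
    ∑ l ∈ range N, Φ (derivAt D l (face N q g)) =
      ∑ l ∈ range (N + 1), Φ (face N q (derivAt D l g)) := by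
  unfold face
  split_ifs with hq
  · rw [sum_derivAt_mulAt (hΦ q hq) hD, if_pos hq]
  · obtain ⟨N, rfl⟩ := Nat.exists_eq_succ_of_ne_zero hN.ne'
    rw [sum_range_succ _ N.succ, sum_range_succ', sum_range_succ',
      (hΦ 0 hN).derivAt_cyclicMul hΦN hD hN.ne', ← add_assoc]
    congr 2
    refine sum_congr rfl fun l hl => ?_
    rw [CycChain.derivAt_cyclicMul (by omega) (by grind)]

theorem sum_derivAt_succ_face (hΦ : q < N → SlotAdditive Φ q) (hD : IsLeibniz D) {j : ℕ}
    (hj : j < N) (g : ℕ → A) :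
    (if q = 0 then Φ (mulAt 0 (derivAt D 1 g)) else 0) +
        ∑ l ∈ range j, Φ (derivAt D (l + 1) (face N q g)) =
      ∑ l ∈ range (if j < q then j else j + 1), Φ (face N q (derivAt D (l + 1) g)) := by
  induction j with
  | zero =>
    rcases Nat.eq_zero_or_pos q with rfl | hq
    · simp [face, hj]
    · simp [hq, hq.ne']
  | succ j ih =>
    rw [sum_range_succ, ← add_assoc, ih (by omega)]
    unfold face
    by_cases hq : q < N
    · simp only [hq, if_true]
      rcases lt_trichotomy q (j + 1) with h | rfl | h
      · rw [derivAt_mulAt_of_gt h, if_neg (by omega), if_neg (by omega), sum_range_succ _ (j + 1)]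
      · rw [(hΦ hq).derivAt_mulAt hD, if_pos (by omega), if_neg (by omega),
          sum_range_succ _ (j + 1), sum_range_succ, ← add_assoc]
      · rw [derivAt_mulAt_of_lt h, if_pos (by omega), if_pos (by omega), sum_range_succ]
    · simp only [hq, if_false]
      rw [CycChain.derivAt_cyclicMul (by omega) (by omega), if_pos (by omega), if_pos (by omega),
        sum_range_succ]

end Leibniz

section Chains
variable (k : Type*) {A : Type*} [CommRing k] [Ring A] [Algebra k A]

/-- The chain `g 0 ⊗ g 1 ⊗ ⋯ ⊗ g n` of `C_n(A)`. As `A₊ = k ⊕ A`, these chains and the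
`oneChain`s span `C_n(A)`. -/
noncomputable def tensorChain (n : ℕ) (g : ℕ → A) : CycChain k A n :=
  elemC k A n (Unitization.inr (g 0)) fun i => g (i + 1)

/-- The chain `e ⊗ g 0 ⊗ ⋯ ⊗ g (n - 1)` of `C_n(A)`, where `e` is the unit of `A₊`. -/
noncomputable def oneChain (n : ℕ) (g : ℕ → A) : CycChain k A n := elemC k A n 1 g

variable {k} {n q : ℕ}

theorem dependsOn_elemC (a : Unitization k A) : DependsOn (elemC k A n a) (Set.Iio n) :=
  fun f g h => by simp only [elemC, fun i : Fin n => h i i.2]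

theorem dependsOn_tensorChain : DependsOn (tensorChain k n : (ℕ → A) → _) (Set.Iio (n + 1)) :=
  fun f g h => by
    rw [tensorChain, h 0 n.succ_pos]
    exact dependsOn_elemC _ fun i hi => h (i + 1) (Nat.succ_lt_succ hi)

theorem dependsOn_oneChain : DependsOn (oneChain k n : (ℕ → A) → _) (Set.Iio n) :=
  dependsOn_elemC 1

theorem elemC_add (a b : Unitization k A) (f : ℕ → A) :
    elemC k A n (a + b) f = elemC k A n a f + elemC k A n b f :=
  TensorProduct.add_tmul _ _ _

theorem elemC_smul (c : k) (a : Unitization k A) (f : ℕ → A) :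
    elemC k A n (c • a) f = c • elemC k A n a f :=
  (TensorProduct.smul_tmul' _ _ _).symm

theorem slotAdditive_elemC (hq : q < n) (a : Unitization k A) :
    SlotAdditive (elemC k A n a) q := by
  have restrict (f : ℕ → A) (z : A) : (fun i : Fin n => Function.update f q z i) =
      Function.update (fun i : Fin n => f i) ⟨q, hq⟩ z :=
    Function.update_comp_eq_of_injective f Fin.val_injective ⟨q, hq⟩ z
  intro f x y
  simp only [elemC, restrict, MultilinearMap.map_update_add, TensorProduct.tmul_add]

theorem slotAdditive_oneChain (hq : q < n) : SlotAdditive (oneChain k n : (ℕ → A) → _) q :=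
  slotAdditive_elemC hq 1

theorem slotAdditive_tensorChain (hq : q ≤ n) :
    SlotAdditive (tensorChain k n : (ℕ → A) → _) q := by
  intro g x y
  cases q with
  | zero => simp [tensorChain, elemC_add]
  | succ q =>
    have tail (z : A) : (fun i => Function.update g (q + 1) z (i + 1)) =
        Function.update (fun i => g (i + 1)) q z :=
      Function.update_comp_eq_of_injective g (add_left_injective 1) q z
    simp only [tensorChain, tail, Function.update_of_ne q.succ_ne_zero.symm]
    exact slotAdditive_elemC hq _ _ x y

theorem slotAdditive_tensorChain_mulAt (hq : q ≤ n) :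
    SlotAdditive (fun g : ℕ → A => tensorChain k n (mulAt q g)) (q + 1) := by
  have merge (g : ℕ → A) (z : A) : mulAt q (Function.update g (q + 1) z) =
      Function.update (mulAt q g) q (g q * z) := by
    funext i
    simp only [mulAt, Function.update_apply]
    split_ifs <;> first | omega | rfl
  intro g x y
  simp only [merge, mul_add, slotAdditive_tensorChain hq _ _ _]

theorem slotAdditive_oneChain_rotate {j : ℕ} (hq : q < n) (hj : j ≤ n) :
    SlotAdditive (fun g : ℕ → A => oneChain k n (rotate n j g)) q := by
  have shift (g : ℕ → A) (z : A) : oneChain k n (rotate n j (Function.update g q z)) =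
      oneChain k n (Function.update (rotate n j g) (if j ≤ q then q - j else q + n - j) z) :=
    dependsOn_oneChain fun i (hi : i < n) => by
      simp only [rotate, Function.update_apply]
      split_ifs <;> first | omega | rfl
  intro g x y
  simp only [shift]
  exact slotAdditive_oneChain (by split_ifs <;> omega) _ x y

theorem elemC_eq_oneChain_add_tensorChain (a : Unitization k A) (f : ℕ → A) :
    elemC k A n a f =
      a.fst • oneChain k n f + tensorChain k n (fun i => if i = 0 then a.snd else f (i - 1)) := by
  have split : a = a.fst • (1 : Unitization k A) + Unitization.inr a.snd := by ext <;> simp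
  conv_lhs => rw [split, elemC_add, elemC_smul]
  simp [oneChain, tensorChain]

variable {M : Type*} [AddCommGroup M] [Module k M] {Φ Ψ : CycChain k A n →ₗ[k] M}

theorem hom_ext_elemC (h : ∀ a f, Φ (elemC k A n a f) = Ψ (elemC k A n a f)) : Φ = Ψ := by
  refine TensorProduct.ext (LinearMap.ext fun a => PiTensorProduct.ext (MultilinearMap.ext
    fun f => ?_))
  simpa [elemC] using h a fun i => if hi : i < n then f ⟨i, hi⟩ else 0

theorem hom_ext (htensor : ∀ g, Φ (tensorChain k n g) = Ψ (tensorChain k n g))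
    (hone : ∀ g, Φ (oneChain k n g) = Ψ (oneChain k n g)) : Φ = Ψ :=
  hom_ext_elemC fun a f => by
    simp only [elemC_eq_oneChain_add_tensorChain, map_add, map_smul, htensor, hone]

end Chains

section Operators
variable {k A : Type*} [CommRing k] [Ring A] [Algebra k A] {n : ℕ}

/-- `b` is the Hochschild boundary of the cyclic complex of `A`: it has the standard values on
elementary chains. -/
def IsHochschildBoundary (b : ∀ n, CycChain k A (n + 1) →ₗ[k] CycChain k A n) : Prop :=
  ∀ n a f, b n (elemC k A (n + 1) a f) = bElemF k A n a f

/-- `B` is the Connes operator of the cyclic complex of `A`: it has the standard values on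
elementary chains. -/
def IsConnesOperator (B : ∀ n, CycChain k A n →ₗ[k] CycChain k A (n + 1)) : Prop :=
  ∀ n a f, B n (elemC k A n a f) = BElemF k A n a f

/-- The canonical map `A^{⊗(n+1)} → A ⊗ A^{⊗n}`. -/
noncomputable def splitFirst (n : ℕ) : PiTensorProduct k (fun _ : Fin (n + 1) => A) →ₗ[k]
    A ⊗[k] PiTensorProduct k (fun _ : Fin n => A) :=
  PiTensorProduct.lift (LinearMap.uncurryLeft (M := fun _ : Fin (n + 1) => A)
    (PiTensorProduct.lift.symm.toLinearMap ∘ₗ TensorProduct.mk k A _))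

theorem splitFirst_tprod (f : ℕ → A) :
    splitFirst n (PiTensorProduct.tprod k fun i : Fin (n + 1) => f i) =
      f 0 ⊗ₜ PiTensorProduct.tprod k fun i : Fin n => f (i + 1) := by
  rw [splitFirst, PiTensorProduct.lift.tprod, LinearMap.uncurryLeft_apply]
  simp [Fin.tail_def]

/-- The map `A₊ ⊗ A^{⊗n} → A^{⊗(n+1)}` induced by the projection `A₊ → A`. -/
noncomputable def consSnd (n : ℕ) :
    CycChain k A n →ₗ[k] PiTensorProduct k (fun _ : Fin (n + 1) => A) :=
  TensorProduct.lift ((PiTensorProduct.lift.toLinearMap ∘ₗ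
    (MultilinearMap.curryLeft (M := fun _ : Fin (n + 1) => A) (PiTensorProduct.tprod k))) ∘ₗ
    Unitization.sndHom k k A)

theorem consSnd_elemC (a : Unitization k A) (f : ℕ → A) :
    consSnd n (elemC k A n a f) = PiTensorProduct.tprod k fun i : Fin (n + 1) =>
      if (i : ℕ) = 0 then a.snd else f (i - 1) := by
  rw [consSnd, elemC, TensorProduct.lift.tmul]
  simp only [LinearMap.comp_apply, LinearEquiv.coe_coe, PiTensorProduct.lift.tprod,
    MultilinearMap.curryLeft_apply]
  congr 1
  funext i
  cases i using Fin.cases <;> simp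

/-- The `j`-th summand of the Connes operator, up to its sign: rotate the entries by `j` and put `e`
in front. -/
noncomputable def rotation (n j : ℕ) : CycChain k A n →ₗ[k] CycChain k A (n + 1) :=
  TensorProduct.mk k (Unitization k A) _ 1 ∘ₗ
    (PiTensorProduct.reindex k (fun _ : Fin (n + 1) => A)
      (Equiv.addLeft (Fin.ofNat (n + 1) j)).symm).toLinearMap ∘ₗ consSnd n

theorem rotation_elemC (j : ℕ) (a : Unitization k A) (f : ℕ → A) :
    rotation n j (elemC k A n a f) = elemC k A (n + 1) 1
      (fun i => (fun m => if m = 0 then a.snd else f (m - 1)) ((j + i) % (n + 1))) := by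
  rw [rotation, LinearMap.comp_apply, LinearMap.comp_apply, consSnd_elemC, LinearEquiv.coe_coe]
  erw [PiTensorProduct.reindex_tprod]
  simp [elemC, Fin.val_add]

theorem rotation_tensorChain {j : ℕ} (hj : j ≤ n + 1) (g : ℕ → A) :
    rotation n j (tensorChain k n g) = oneChain k (n + 1) (rotate (n + 1) j g) := by
  rw [tensorChain, rotation_elemC]
  refine dependsOn_oneChain fun i hi => ?_
  rw [← apply_add_mod hj hi]
  rcases (j + i) % (n + 1) with _ | m <;> simp

theorem rotation_oneChain (j : ℕ) (g : ℕ → A) : rotation n j (oneChain k n g) = 0 := by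
  simp [rotation, consSnd, oneChain, elemC]

/-- The operator applying `D` to the entry `f l` of an elementary chain `a₀ ⊗ f 0 ⊗ f 1 ⊗ ⋯`. -/
noncomputable def applyAt (D : A →ₗ[k] A) (n l : ℕ) : CycChain k A n →ₗ[k] CycChain k A n :=
  LinearMap.lTensor _ (PiTensorProduct.map fun i : Fin n => if (i : ℕ) = l then D else LinearMap.id)

variable {D : A →ₗ[k] A}

theorem applyAt_elemC (l : ℕ) (a : Unitization k A) (f : ℕ → A) :
    applyAt D n l (elemC k A n a f) = elemC k A n a (derivAt D l f) := by
  rw [applyAt, elemC, LinearMap.lTensor_tmul, PiTensorProduct.map_tprod, elemC]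
  congr 2
  funext i
  by_cases hi : (i : ℕ) = l <;> simp [hi, derivAt]

theorem applyAt_tensorChain (l : ℕ) (g : ℕ → A) :
    applyAt D n l (tensorChain k n g) = tensorChain k n (derivAt D (l + 1) g) := by
  rw [tensorChain, applyAt_elemC, tensorChain, derivAt, derivAt,
    Function.update_of_ne l.succ_ne_zero.symm]
  congr 1
  exact (Function.update_comp_eq_of_injective g (add_left_injective 1) l _).symm

theorem applyAt_oneChain (l : ℕ) (g : ℕ → A) :
    applyAt D n l (oneChain k n g) = oneChain k n (derivAt D l g) :=
  applyAt_elemC l 1 g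

variable (D)

/-- The contraction `e_D(a₀ ⊗ a₁ ⊗ a₂ ⊗ ⋯) = a₀ D(a₁) ⊗ a₂ ⊗ ⋯` of the Cartan homotopy formula. -/
noncomputable def contraction (n : ℕ) : CycChain k A (n + 1) →ₗ[k] CycChain k A n :=
  LinearMap.rTensor _ (TensorProduct.lift ((LinearMap.mul k (Unitization k A)).compl₂
      (Unitization.inrHom k k A ∘ₗ D))) ∘ₗ
    (TensorProduct.assoc k (Unitization k A) A
      (PiTensorProduct k fun _ : Fin n => A)).symm.toLinearMap ∘ₗ
    LinearMap.lTensor _ (splitFirst n)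

/-- The second contraction `S_D` of the Cartan homotopy formula: on `a₀ ⊗ ⋯ ⊗ a_n` it is the
signed sum of the `e ⊗ a_{j+1} ⊗ ⋯ ⊗ a_n ⊗ a₀ ⊗ ⋯ ⊗ D(a_l) ⊗ ⋯ ⊗ a_j` with `1 ≤ l ≤ j`. -/
noncomputable def cyclicContraction (n : ℕ) : CycChain k A n →ₗ[k] CycChain k A (n + 1) :=
  ∑ j ∈ range (n + 1), (-1 : ℤ) ^ ((j + 1) * n) •
    ∑ l ∈ range j, rotation n (j + 1) ∘ₗ applyAt D n l

/-- The Lie derivative `L_D`: the sum over all entries of a chain of applying `D` there, where `D`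
is extended to `A₊` by `D(e) = 0`. -/
noncomputable def lieDerivative (n : ℕ) : CycChain k A n →ₗ[k] CycChain k A n :=
  LinearMap.rTensor _ (Unitization.inrHom k k A ∘ₗ D ∘ₗ Unitization.sndHom k k A) +
    ∑ l ∈ range n, applyAt D n l

variable {D}

theorem contraction_elemC (a : Unitization k A) (f : ℕ → A) :
    contraction D n (elemC k A (n + 1) a f) =
      elemC k A n (a * Unitization.inr (D (f 0))) fun i => f (i + 1) := by
  simp only [contraction, elemC, LinearMap.comp_apply, LinearMap.lTensor_tmul, splitFirst_tprod,
    LinearEquiv.coe_coe, TensorProduct.assoc_symm_tmul, LinearMap.rTensor_tmul,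
    TensorProduct.lift.tmul, LinearMap.compl₂_apply, LinearMap.mul_apply', Unitization.inrHom_apply]

theorem contraction_tensorChain (g : ℕ → A) :
    contraction D n (tensorChain k (n + 1) g) = tensorChain k n (mulAt 0 (derivAt D 1 g)) := by
  rw [tensorChain, contraction_elemC, ← Unitization.inr_mul]
  simp [tensorChain, mulAt, derivAt]

theorem contraction_oneChain (g : ℕ → A) :
    contraction D n (oneChain k (n + 1) g) = tensorChain k n (derivAt D 0 g) := by
  rw [oneChain, contraction_elemC, one_mul]
  simp [tensorChain, derivAt]

theorem cyclicContraction_tensorChain (g : ℕ → A) :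
    cyclicContraction D n (tensorChain k n g) = ∑ j ∈ range (n + 1), (-1 : ℤ) ^ ((j + 1) * n) •
      ∑ l ∈ range j, oneChain k (n + 1) (rotate (n + 1) (j + 1) (derivAt D (l + 1) g)) := by
  simp only [cyclicContraction, LinearMap.sum_apply, LinearMap.smul_apply, LinearMap.comp_apply,
    applyAt_tensorChain]
  refine sum_congr rfl fun j hj => ?_
  simp only [rotation_tensorChain (Nat.succ_le_of_lt (mem_range.mp hj))]

theorem cyclicContraction_oneChain (g : ℕ → A) :
    cyclicContraction D n (oneChain k n g) = 0 := by
  simp [cyclicContraction, applyAt_oneChain, rotation_oneChain]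

theorem lieDerivative_tensorChain (g : ℕ → A) :
    lieDerivative D n (tensorChain k n g) =
      ∑ l ∈ range (n + 1), tensorChain k n (derivAt D l g) := by
  rw [sum_range_succ', add_comm]
  simp only [lieDerivative, LinearMap.add_apply, LinearMap.sum_apply, applyAt_tensorChain]
  congr 1

theorem lieDerivative_oneChain (g : ℕ → A) :
    lieDerivative D n (oneChain k n g) = ∑ l ∈ range n, oneChain k n (derivAt D l g) := by
  simp only [lieDerivative, LinearMap.add_apply, LinearMap.sum_apply, applyAt_oneChain]
  simp [oneChain, elemC]

variable {b : ∀ n, CycChain k A (n + 1) →ₗ[k] CycChain k A n}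
  {B : ∀ n, CycChain k A n →ₗ[k] CycChain k A (n + 1)}

theorem IsHochschildBoundary.apply_tensorChain (hb : IsHochschildBoundary b) (g : ℕ → A) :
    b n (tensorChain k (n + 1) g) =
      ∑ q ∈ range (n + 2), (-1 : ℤ) ^ q • tensorChain k n (face (n + 1) q g) := by
  rw [tensorChain, hb, bElemF, sum_range_succ, sum_range_succ', add_comm (elemC k A n _ _)]
  congr 2
  · refine sum_congr rfl fun q hq => ?_
    simp [face, mulAt, tensorChain, mem_range.mp hq]
  · simp [face, mulAt, tensorChain]
  · simp [face, cyclicMul, tensorChain]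

theorem IsHochschildBoundary.apply_oneChain (hb : IsHochschildBoundary b) (g : ℕ → A) :
    b n (oneChain k (n + 1) g) = tensorChain k n g -
      ∑ q ∈ range n, (-1 : ℤ) ^ q • oneChain k n (mulAt q g) -
      (-1 : ℤ) ^ n • tensorChain k n (rotate (n + 1) n g) := by
  have last : elemC k A n (Unitization.inr (g n)) g = tensorChain k n (rotate (n + 1) n g) := by
    have first : rotate (n + 1) n g 0 = g n := by simp [rotate]
    rw [tensorChain, first]
    refine dependsOn_elemC _ fun i _ => ?_
    rw [rotate, if_neg (by omega), show n + (i + 1) - (n + 1) = i by omega]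
  rw [oneChain, hb, bElemF, one_mul, mul_one, last]
  simp only [pow_succ, mul_neg, mul_one, neg_smul, sum_neg_distrib, sub_eq_add_neg]
  rfl

theorem IsConnesOperator.apply_elemC (hB : IsConnesOperator B) (a : Unitization k A) (f : ℕ → A) :
    B n (elemC k A n a f) =
      ∑ j ∈ range (n + 1), (-1 : ℤ) ^ (j * n) • rotation n j (elemC k A n a f) := by
  simp only [hB n a f, BElemF, rotation_elemC]

theorem IsConnesOperator.apply_tensorChain (hB : IsConnesOperator B) (g : ℕ → A) :
    B n (tensorChain k n g) =
      ∑ j ∈ range (n + 1), (-1 : ℤ) ^ (j * n) • oneChain k (n + 1) (rotate (n + 1) j g) := by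
  rw [tensorChain, hB.apply_elemC]
  refine sum_congr rfl fun j hj => ?_
  rw [← rotation_tensorChain (mem_range.mp hj).le, tensorChain]

theorem IsConnesOperator.apply_tensorChain_succ (hB : IsConnesOperator B) (g : ℕ → A) :
    B n (tensorChain k n g) = ∑ j ∈ range (n + 1),
      (-1 : ℤ) ^ ((j + 1) * n) • oneChain k (n + 1) (rotate (n + 1) (j + 1) g) := by
  have even : Even ((n + 1) * n) := mul_comm n (n + 1) ▸ Nat.even_mul_succ_self n
  have ends : oneChain k (n + 1) (rotate (n + 1) 0 g) = oneChain k (n + 1) g :=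
    dependsOn_oneChain fun i hi => rotate_zero_apply hi g
  rw [hB.apply_tensorChain, sum_range_succ', sum_range_succ, zero_mul, pow_zero, even.neg_one_pow,
    ends, rotate_self]

theorem IsConnesOperator.apply_oneChain (hB : IsConnesOperator B) (g : ℕ → A) :
    B n (oneChain k n g) = 0 := by
  rw [oneChain, hB.apply_elemC]
  exact sum_eq_zero fun j _ => by rw [← oneChain, rotation_oneChain, smul_zero]

end Operators

section CyclicSums
variable {A M : Type*} [AddCommGroup M] {n : ℕ} {Φ : (ℕ → A) → M}

theorem apply_zero_add_sum_sub_sum (T U : ℕ → M) (j : ℕ) :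
    T 0 + (∑ l ∈ range j, U l - ∑ l ∈ range j, T l) =
      T j + ∑ l ∈ range j, (U l - T (l + 1)) := by
  have ends : T 0 = ∑ l ∈ range j, T l + T j - ∑ l ∈ range j, T (l + 1) :=
    eq_sub_of_add_eq' ((sum_range_succ' T j).symm.trans (sum_range_succ T j))
  rw [ends, sum_sub_distrib]
  abel

theorem sum_telescope (T : ℕ → ℕ → M) (n : ℕ) :
    ∑ j ∈ range (n + 1), (T j j + ∑ l ∈ range j, (T (j + 1) (l + 1) - T j (l + 1))) =
      T 0 0 + ∑ l ∈ range n, T (n + 1) (l + 1) := by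
  induction n with
  | zero => simp
  | succ n ih =>
    rw [sum_range_succ, ih, sum_sub_distrib, sum_range_succ (fun l => T (n + 1) (l + 1))]
    abel

theorem sum_rotate_telescope (hΦ : DependsOn Φ (Set.Iio (n + 1))) (G : ℕ → ℕ → A) :
    ∑ j ∈ range (n + 1), ((-1 : ℤ) ^ (j * n) • Φ (rotate (n + 1) j (G j)) + ∑ l ∈ range j,
      ((-1 : ℤ) ^ ((j + 1) * n) • Φ (rotate (n + 1) (j + 1) (G (l + 1))) -
        (-1 : ℤ) ^ (j * n) • Φ (rotate (n + 1) j (G (l + 1))))) =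
      ∑ l ∈ range (n + 1), Φ (G l) := by
  have even : Even ((n + 1) * n) := mul_comm n (n + 1) ▸ Nat.even_mul_succ_self n
  have start : Φ (rotate (n + 1) 0 (G 0)) = Φ (G 0) := hΦ fun i hi => rotate_zero_apply hi _
  rw [sum_telescope fun j l => (-1 : ℤ) ^ (j * n) • Φ (rotate (n + 1) j (G l)), sum_range_succ',
    add_comm]
  simp only [even.neg_one_pow, zero_mul, pow_zero, one_smul, rotate_self, start]

/-- Reindexing: the face `q ≤ n + 1` rotated by `j + 1` is the face `q - j - 1` of the rotation by
`j + 1` if `j < q`, and the face `q + n - j` of the rotation by `j + 2` otherwise. -/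
theorem sum_rotate_face [Mul A] (hΦ : DependsOn Φ (Set.Iio (n + 1))) (G : ℕ → ℕ → A) :
    ∑ q ∈ range (n + 2), ∑ j ∈ range (n + 1), (-1 : ℤ) ^ (q + (j + 1) * n) •
        ∑ l ∈ range (if j < q then j else j + 1),
          Φ (rotate (n + 1) (j + 1) (face (n + 1) q (G l))) =
      ∑ j ∈ range (n + 2), ∑ p ∈ range (n + 1), (-1 : ℤ) ^ ((j + 1) * (n + 1) + p) •
        ∑ l ∈ range j, Φ (mulAt p (rotate (n + 2) (j + 1) (G l))) := by
  rw [← sum_product', ← sum_product']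
  refine sum_nbij'
    (fun x => if x.2 < x.1 then (x.2, x.1 - x.2 - 1) else (x.2 + 1, x.1 + n - x.2))
    (fun y => if y.1 + y.2 ≤ n then (y.1 + 1 + y.2, y.1) else (y.1 + y.2 - n - 1, y.1 - 1))
    ?_ ?_ ?_ ?_ ?_
  · grind
  · grind
  · grind
  · grind
  · rintro ⟨q, j⟩ h
    obtain ⟨hq, hj⟩ : q < n + 2 ∧ j < n + 1 := by simpa using h
    by_cases hqj : j < q
    · simp only [hqj, if_true]
      congr 1
      · refine neg_one_pow_congr (Nat.even_add.mp ?_)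
        obtain ⟨r, rfl⟩ := Nat.exists_eq_add_of_lt hqj
        exact ⟨(j + 1) * n + j + r + 1, by grind⟩
      · refine sum_congr rfl fun l _ => (hΦ fun i hi => ?_).symm
        rw [mulAt_rotate_of_add_le (by omega) (by omega) hi,
          show j + 1 + (q - j - 1) = q by omega]
    · simp only [hqj, if_false]
      congr 1
      · refine neg_one_pow_congr (Nat.even_add.mp ?_)
        obtain ⟨r, rfl⟩ := Nat.exists_eq_add_of_le (Nat.lt_succ_iff.mp hj)
        exact ⟨(j + 1) * (j + r) + q + j + r + 1, by grind⟩
      · refine sum_congr rfl fun l _ => (hΦ fun i hi => ?_).symm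
        rw [mulAt_rotate_of_lt_add (by omega) (by omega) (by omega) hi, Nat.add_sub_cancel,
          show j + 1 + 1 + (q + n - j) - (n + 1) - 1 = q by omega]

end CyclicSums

section Cartan
variable {k A : Type*} [CommRing k] [Ring A] [Algebra k A] {D : A →ₗ[k] A}
  {b : ∀ n, CycChain k A (n + 1) →ₗ[k] CycChain k A n}
  {B : ∀ n, CycChain k A n →ₗ[k] CycChain k A (n + 1)}

theorem tensorChain_derivAt_rotate {n j : ℕ} (hj : j < n + 1) (g : ℕ → A) :
    tensorChain k n (derivAt D 0 (rotate (n + 1) j g)) =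
      tensorChain k n (rotate (n + 1) j (derivAt D j g)) :=
  dependsOn_tensorChain fun i hi => by
    rw [derivAt_rotate D j n.succ_pos hi, add_zero, if_pos hj]

theorem lieDerivative_comp_hochschild (hb : IsHochschildBoundary b) (hD : IsLeibniz D) (n : ℕ) :
    lieDerivative D n ∘ₗ b n = b n ∘ₗ lieDerivative D (n + 1) := by
  refine hom_ext (fun g => ?_) fun g => ?_
  · simp only [LinearMap.comp_apply, hb.apply_tensorChain, lieDerivative_tensorChain, map_sum,
      map_zsmul]
    rw [sum_comm (s := range (n + 1 + 1))]
    refine sum_congr rfl fun q _ => ?_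
    rw [← smul_sum, sum_derivAt_face (fun i hi => slotAdditive_tensorChain (Nat.lt_succ_iff.mp hi))
      dependsOn_tensorChain hD n.succ_pos]
  · simp only [LinearMap.comp_apply, hb.apply_oneChain, lieDerivative_oneChain,
      lieDerivative_tensorChain, map_sub, map_sum, map_zsmul, sum_sub_distrib, ← smul_sum,
      sum_derivAt_rotate dependsOn_tensorChain n.le_succ]
    congr 2
    rw [sum_comm (s := range (n + 1))]
    refine sum_congr rfl fun q hq => ?_
    have hq := mem_range.mp hq
    rw [← smul_sum, sum_derivAt_mulAt (slotAdditive_oneChain hq) hD, if_pos hq]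

theorem lieDerivative_comp_connes (hB : IsConnesOperator B) (n : ℕ) :
    lieDerivative D (n + 1) ∘ₗ B n = B n ∘ₗ lieDerivative D n := by
  refine hom_ext (fun g => ?_) fun g => ?_
  · simp only [LinearMap.comp_apply, hB.apply_tensorChain, lieDerivative_oneChain,
      lieDerivative_tensorChain, map_sum, map_zsmul]
    rw [sum_comm]
    refine sum_congr rfl fun j hj => ?_
    rw [← smul_sum, sum_derivAt_rotate dependsOn_oneChain (mem_range.mp hj).le]
  · simp [hB.apply_oneChain, lieDerivative_oneChain]

theorem cyclicContraction_comp_connes (hB : IsConnesOperator B) (n : ℕ) :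
    cyclicContraction D (n + 1) ∘ₗ B n = 0 := by
  refine hom_ext (fun g => ?_) fun g => ?_
  · simp only [LinearMap.comp_apply, hB.apply_tensorChain, map_sum, map_zsmul,
      cyclicContraction_oneChain, smul_zero, sum_const_zero, LinearMap.zero_apply]
  · simp only [LinearMap.comp_apply, hB.apply_oneChain, map_zero, LinearMap.zero_apply]

theorem connes_comp_cyclicContraction (hB : IsConnesOperator B) (n : ℕ) :
    B (n + 1) ∘ₗ cyclicContraction D n = 0 := by
  refine hom_ext (fun g => ?_) fun g => ?_
  · simp only [LinearMap.comp_apply, cyclicContraction_tensorChain, map_sum, map_zsmul,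
      hB.apply_oneChain, smul_zero, sum_const_zero, LinearMap.zero_apply]
  · simp only [LinearMap.comp_apply, cyclicContraction_oneChain, map_zero, LinearMap.zero_apply]

theorem hochschild_contraction_tensorChain (hb : IsHochschildBoundary b) (hD : IsLeibniz D)
    (n : ℕ) (g : ℕ → A) :
    b n (contraction D (n + 1) (tensorChain k (n + 2) g)) =
      -contraction D n (b (n + 1) (tensorChain k (n + 2) g)) := by
  have outer (q : ℕ) : mulAt 0 (derivAt D 1 (face (n + 2) (q + 2) g)) =
      face (n + 1) (q + 1) (mulAt 0 (derivAt D 1 g)) := by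
    rw [← mulAt_zero_face n.succ_pos]
    unfold face
    split_ifs with hq
    · rw [derivAt_mulAt_of_lt (by omega)]
    · rw [derivAt_cyclicMul one_ne_zero (by omega)]
  have inner : tensorChain k n (mulAt 0 (derivAt D 1 (face (n + 2) 1 g))) =
      tensorChain k n (face (n + 1) 0 (mulAt 0 (derivAt D 1 g))) +
        tensorChain k n (mulAt 0 (derivAt D 1 (face (n + 2) 0 g))) := by
    have assoc (h : ℕ → A) : mulAt 0 (mulAt 0 h) = mulAt 0 (mulAt 1 h) :=
      (mulAt_zero_face (Nat.succ_pos n) 0 h).symm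
    simp only [face, n.succ_pos, Nat.succ_lt_succ n.succ_pos, (n + 1).succ_pos, if_true]
    rw [derivAt_mulAt_of_gt one_pos, assoc, assoc]
    exact (slotAdditive_tensorChain_mulAt (k := k) n.zero_le).derivAt_mulAt hD g
  rw [contraction_tensorChain, hb.apply_tensorChain, hb.apply_tensorChain, sum_range_succ',
    sum_range_succ' _ (n + 2), sum_range_succ' _ (n + 1)]
  simp only [map_add, map_sum, map_zsmul, contraction_tensorChain]
  simp only [outer, inner, pow_succ, pow_zero, one_smul, mul_neg, mul_one, neg_smul, neg_neg,
    sum_neg_distrib, zero_add]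
  abel

theorem hochschild_contraction_oneChain (hb : IsHochschildBoundary b) (hD : IsLeibniz D)
    (n : ℕ) (g : ℕ → A) :
    b n (contraction D (n + 1) (oneChain k (n + 2) g)) =
      -contraction D n (b (n + 1) (oneChain k (n + 2) g)) := by
  have first : tensorChain k n (derivAt D 0 (mulAt 0 g)) =
      tensorChain k n (mulAt 0 (derivAt D 0 g)) + tensorChain k n (mulAt 0 (derivAt D 1 g)) :=
    (slotAdditive_tensorChain n.zero_le).derivAt_mulAt hD g
  have later (q : ℕ) : derivAt D 0 (mulAt (q + 1) g) = mulAt (q + 1) (derivAt D 0 g) :=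
    derivAt_mulAt_of_lt q.succ_pos g
  have last : tensorChain k n (mulAt 0 (derivAt D 1 (rotate (n + 2) (n + 1) g))) =
      tensorChain k n (cyclicMul (n + 1) (derivAt D 0 g)) :=
    dependsOn_tensorChain fun i (hi : i < n + 1) => by
      rcases i with _ | i
      · simp [mulAt, cyclicMul, derivAt, rotate]
      · simp [mulAt, cyclicMul, derivAt, rotate, show ¬ n + 1 + (i + 1 + 1) < n + 2 by omega,
          show n + 1 + (i + 1 + 1) - (n + 2) = i + 1 by omega]
  rw [contraction_oneChain, hb.apply_tensorChain, hb.apply_oneChain, sum_range_succ _ (n + 1),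
    sum_range_succ' _ n, sum_range_succ' _ n]
  have faces : ∀ q < n, face (n + 1) (q + 1) (derivAt D 0 g) = mulAt (q + 1) (derivAt D 0 g) :=
    fun q hq => if_pos (Nat.succ_lt_succ hq)
  rw [sum_congr rfl fun q hq => by rw [faces q (mem_range.mp hq)]]
  simp only [map_sum, map_zsmul, map_sub, map_add, contraction_tensorChain, contraction_oneChain,
    first, later, last, face, n.succ_pos, if_true, lt_irrefl, if_false, smul_add]
  abel

theorem hochschild_comp_contraction (hb : IsHochschildBoundary b) (hD : IsLeibniz D) (n : ℕ) :
    b n ∘ₗ contraction D (n + 1) + contraction D n ∘ₗ b (n + 1) = 0 :=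
  hom_ext
    (fun g => by
      simp only [LinearMap.add_apply, LinearMap.comp_apply, LinearMap.zero_apply,
        hochschild_contraction_tensorChain hb hD, neg_add_cancel])
    fun g => by
      simp only [LinearMap.add_apply, LinearMap.comp_apply, LinearMap.zero_apply,
        hochschild_contraction_oneChain hb hD, neg_add_cancel]

theorem hochschild_rotate (hb : IsHochschildBoundary b) {n j : ℕ} (hj : j ≤ n) (h : ℕ → A) :
    (-1 : ℤ) ^ ((j + 1) * n) • b n (oneChain k (n + 1) (rotate (n + 1) (j + 1) h)) =
      (-1 : ℤ) ^ ((j + 1) * n) • tensorChain k n (rotate (n + 1) (j + 1) h) -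
        (-1 : ℤ) ^ (j * n) • tensorChain k n (rotate (n + 1) j h) -
        ∑ p ∈ range n, (-1 : ℤ) ^ ((j + 1) * n + p) •
          oneChain k n (mulAt p (rotate (n + 1) (j + 1) h)) := by
  have sign : (-1 : ℤ) ^ ((j + 1) * n + n) = (-1) ^ (j * n) :=
    neg_one_pow_congr (Nat.even_add.mp ⟨j * n + n, by ring⟩)
  rw [hb.apply_oneChain, rotate_rotate_succ hj, smul_sub, smul_sub, smul_sum, smul_smul, ← pow_add,
    sign, sub_right_comm]
  simp only [smul_smul, ← pow_add]

theorem hochschild_cyclicContraction_tensorChain (hb : IsHochschildBoundary b) (n : ℕ)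
    (g : ℕ → A) :
    b n (cyclicContraction D n (tensorChain k n g)) =
      ∑ j ∈ range (n + 1), ∑ l ∈ range j,
        ((-1 : ℤ) ^ ((j + 1) * n) • tensorChain k n (rotate (n + 1) (j + 1) (derivAt D (l + 1) g)) -
          (-1 : ℤ) ^ (j * n) • tensorChain k n (rotate (n + 1) j (derivAt D (l + 1) g))) -
      ∑ j ∈ range (n + 1), ∑ p ∈ range n, (-1 : ℤ) ^ ((j + 1) * n + p) •
        ∑ l ∈ range j, oneChain k n (mulAt p (rotate (n + 1) (j + 1) (derivAt D (l + 1) g))) := by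
  simp only [cyclicContraction_tensorChain, map_sum, map_zsmul, ← sum_sub_distrib]
  refine sum_congr rfl fun j hj => ?_
  simp only [smul_sum, hochschild_rotate hb (Nat.lt_succ_iff.mp (mem_range.mp hj))]
  rw [sum_comm (s := range n), ← sum_sub_distrib]

theorem contraction_connes_tensorChain (hB : IsConnesOperator B) (n : ℕ) (g : ℕ → A) :
    contraction D n (B n (tensorChain k n g)) =
      ∑ j ∈ range (n + 1), (-1 : ℤ) ^ (j * n) •
        tensorChain k n (rotate (n + 1) j (derivAt D j g)) := by
  simp only [hB.apply_tensorChain, map_sum, map_zsmul, contraction_oneChain]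
  exact sum_congr rfl fun j hj => by rw [tensorChain_derivAt_rotate (mem_range.mp hj)]

theorem connes_contraction_add_cyclicContraction_hochschild (hb : IsHochschildBoundary b)
    (hB : IsConnesOperator B) (hD : IsLeibniz D) (n : ℕ) (g : ℕ → A) :
    B n (contraction D n (tensorChain k (n + 1) g)) +
        cyclicContraction D n (b n (tensorChain k (n + 1) g)) =
      ∑ j ∈ range (n + 2), ∑ p ∈ range (n + 1), (-1 : ℤ) ^ ((j + 1) * (n + 1) + p) •
        ∑ l ∈ range j,
          oneChain k (n + 1) (mulAt p (rotate (n + 2) (j + 1) (derivAt D (l + 1) g))) := by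
  rw [← sum_rotate_face dependsOn_oneChain fun l => derivAt D (l + 1) g]
  have leibniz (q j : ℕ) (hj : j ∈ range (n + 1)) :=
    sum_derivAt_succ_face (N := n + 1) (q := q)
      (fun hq => slotAdditive_oneChain_rotate (k := k) hq (mem_range.mp hj)) hD (mem_range.mp hj) g
  rw [contraction_tensorChain, hB.apply_tensorChain_succ, hb.apply_tensorChain,
    sum_congr rfl fun q _ => sum_congr rfl fun j hj => by rw [← leibniz q j hj]]
  simp only [map_sum, map_zsmul, cyclicContraction_tensorChain, smul_add, sum_add_distrib]
  congr 1
  · simp [sum_range_succ' _ (n + 1)]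
  · simp only [smul_sum, smul_smul, pow_add]

theorem cartan_zero (hb : IsHochschildBoundary b) (hB : IsConnesOperator B) :
    b 0 ∘ₗ cyclicContraction D 0 + contraction D 0 ∘ₗ B 0 = lieDerivative D 0 := by
  refine hom_ext (fun g => ?_) fun g => ?_
  · simp [hochschild_cyclicContraction_tensorChain hb, contraction_connes_tensorChain hB,
      lieDerivative_tensorChain, (dependsOn_tensorChain (k := k) (n := 0)) fun _ hi =>
        rotate_zero_apply hi (derivAt D 0 g)]
  · simp [cyclicContraction_oneChain, hB.apply_oneChain, lieDerivative_oneChain]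

theorem cyclicContraction_rotate (n : ℕ) (g : ℕ → A) :
    (-1 : ℤ) ^ n • cyclicContraction D n (tensorChain k n (rotate (n + 1) n g)) =
      ∑ j ∈ range (n + 1), ∑ l ∈ range j,
        (-1 : ℤ) ^ (j * n) • oneChain k (n + 1) (rotate (n + 1) j (derivAt D l g)) := by
  have sign (j : ℕ) : (-1 : ℤ) ^ (n + (j + 1) * n) = (-1) ^ (j * n) :=
    neg_one_pow_congr (Nat.even_add.mp ⟨j * n + n, by ring⟩)
  have unrotate {j l : ℕ} (hj : j < n + 1) (hl : l < j) :
      tensorChain k n (derivAt D (l + 1) (rotate (n + 1) n g)) =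
        tensorChain k n (rotate (n + 1) n (derivAt D l g)) :=
    dependsOn_tensorChain fun i hi => by
      rw [derivAt_rotate D n (by omega) hi, if_neg (by omega),
        show n + (l + 1) - (n + 1) = l by omega]
  rw [cyclicContraction_tensorChain, smul_sum]
  refine sum_congr rfl fun j hj => ?_
  have hj := mem_range.mp hj
  rw [smul_smul, ← pow_add, sign, smul_sum]
  refine sum_congr rfl fun l hl => ?_
  rw [← rotation_tensorChain hj, unrotate hj (mem_range.mp hl), rotation_tensorChain hj,
    rotate_succ_rotate]

theorem cartan_succ (hb : IsHochschildBoundary b) (hB : IsConnesOperator B) (hD : IsLeibniz D)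
    (n : ℕ) :
    b (n + 1) ∘ₗ cyclicContraction D (n + 1) + contraction D (n + 1) ∘ₗ B (n + 1) +
        (B n ∘ₗ contraction D n + cyclicContraction D n ∘ₗ b n) = lieDerivative D (n + 1) := by
  refine hom_ext (fun g => ?_) fun g => ?_
  · simp only [LinearMap.add_apply, LinearMap.comp_apply,
      connes_contraction_add_cyclicContraction_hochschild hb hB hD,
      hochschild_cyclicContraction_tensorChain hb, contraction_connes_tensorChain hB,
      lieDerivative_tensorChain]
    rw [← sum_rotate_telescope dependsOn_tensorChain fun l => derivAt D l g, sum_add_distrib]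
    abel
  · rw [lieDerivative_oneChain,
      ← sum_rotate_telescope dependsOn_oneChain fun l => derivAt D l g]
    simp only [LinearMap.add_apply, LinearMap.comp_apply, cyclicContraction_oneChain,
      hB.apply_oneChain, map_zero, contraction_oneChain, hb.apply_oneChain, map_sub, map_sum,
      map_zsmul, smul_zero, sum_const_zero, sub_zero, zero_add]
    rw [cyclicContraction_rotate, hB.apply_tensorChain, cyclicContraction_tensorChain,
      ← sum_sub_distrib, ← sum_add_distrib]
    refine sum_congr rfl fun j _ => ?_
    rw [smul_sum]
    exact apply_zero_add_sum_sub_sum (fun l => _ • oneChain k _ (rotate _ j (derivAt D l g))) _ j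

end Cartan

section TotalComplex
variable {k : Type*} [CommRing k] {M N : ℕ → Type*} [∀ n, AddCommGroup (M n)] [∀ n, Module k (M n)]
  [∀ n, AddCommGroup (N n)] [∀ n, Module k (N n)]

/-- The sum of the operators `lo` of degree `-1` and `up` of degree `1` on the product of all `M n`.
For `lo = b` and `up = B` this is the differential of the periodic cyclic complex, whose even and
odd parts are here taken together. -/
def totalMap (lo : ∀ n, M (n + 1) →ₗ[k] M n) (up : ∀ n, M n →ₗ[k] M (n + 1)) :
    (∀ n, M n) →ₗ[k] ∀ n, M n :=
  LinearMap.pi fun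
    | 0 => lo 0 ∘ₗ LinearMap.proj 1
    | n + 1 => lo (n + 1) ∘ₗ LinearMap.proj (n + 2) + up n ∘ₗ LinearMap.proj n

variable {lo lo' : ∀ n, M (n + 1) →ₗ[k] M n} {up up' : ∀ n, M n →ₗ[k] M (n + 1)}

theorem totalMap_comp_add_comp {L : ∀ n, M n →ₗ[k] M n}
    (hlo : ∀ n, lo n ∘ₗ lo' (n + 1) + lo' n ∘ₗ lo (n + 1) = 0)
    (hup : ∀ n, up (n + 1) ∘ₗ up' n + up' (n + 1) ∘ₗ up n = 0)
    (hzero : lo 0 ∘ₗ up' 0 + lo' 0 ∘ₗ up 0 = L 0)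
    (hsucc : ∀ n, lo (n + 1) ∘ₗ up' (n + 1) + lo' (n + 1) ∘ₗ up (n + 1) +
      (up n ∘ₗ lo' n + up' n ∘ₗ lo n) = L (n + 1)) :
    totalMap lo up ∘ₗ totalMap lo' up' + totalMap lo' up' ∘ₗ totalMap lo up =
      LinearMap.piMap L := by
  have hlo (n : ℕ) (x : M (n + 2)) := LinearMap.congr_fun (hlo n) x
  have hup (n : ℕ) (x : M n) := LinearMap.congr_fun (hup n) x
  have hzero (x : M 0) := LinearMap.congr_fun hzero x
  have hsucc (n : ℕ) (x : M (n + 1)) := LinearMap.congr_fun (hsucc n) x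
  simp only [LinearMap.add_apply, LinearMap.comp_apply, LinearMap.zero_apply] at hlo hup hzero hsucc
  refine LinearMap.ext fun x => funext fun n => ?_
  match n with
  | 0 =>
    change lo 0 (lo' 1 (x 2) + up' 0 (x 0)) + lo' 0 (lo 1 (x 2) + up 0 (x 0)) = L 0 (x 0)
    simp only [map_add]
    linear_combination (norm := abel) hlo 0 (x 2) + hzero (x 0)
  | 1 =>
    change lo 1 (lo' 2 (x 3) + up' 1 (x 1)) + up 0 (lo' 0 (x 1)) +
      (lo' 1 (lo 2 (x 3) + up 1 (x 1)) + up' 0 (lo 0 (x 1))) = L 1 (x 1)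
    simp only [map_add]
    linear_combination (norm := abel) hlo 1 (x 3) + hsucc 0 (x 1)
  | n + 2 =>
    change lo (n + 2) (lo' (n + 3) (x (n + 4)) + up' (n + 2) (x (n + 2))) +
        up (n + 1) (lo' (n + 1) (x (n + 2)) + up' n (x n)) +
      (lo' (n + 2) (lo (n + 3) (x (n + 4)) + up (n + 2) (x (n + 2))) +
        up' (n + 1) (lo (n + 1) (x (n + 2)) + up n (x n))) = L (n + 2) (x (n + 2))
    simp only [map_add]
    linear_combination (norm := abel)
      hlo (n + 2) (x (n + 4)) + hsucc (n + 1) (x (n + 2)) + hup n (x n)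

theorem totalMap_comp_piMap {lo : ∀ n, M (n + 1) →ₗ[k] M n} {up : ∀ n, M n →ₗ[k] M (n + 1)}
    {lo' : ∀ n, N (n + 1) →ₗ[k] N n} {up' : ∀ n, N n →ₗ[k] N (n + 1)} {f : ∀ n, M n →ₗ[k] N n}
    (hlo : ∀ n, lo' n ∘ₗ f (n + 1) = f n ∘ₗ lo n) (hup : ∀ n, up' n ∘ₗ f n = f (n + 1) ∘ₗ up n) :
    totalMap lo' up' ∘ₗ LinearMap.piMap f = LinearMap.piMap f ∘ₗ totalMap lo up := by
  refine LinearMap.ext fun x => funext fun n => ?_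
  have hlo (n : ℕ) : lo' n (f (n + 1) (x (n + 1))) = f n (lo n (x (n + 1))) :=
    LinearMap.congr_fun (hlo n) _
  have hup (n : ℕ) : up' n (f n (x n)) = f (n + 1) (up n (x n)) := LinearMap.congr_fun (hup n) _
  match n with
  | 0 => exact hlo 0
  | n + 1 => exact (congr_arg₂ _ (hlo (n + 1)) (hup n)).trans (map_add (f (n + 1)) _ _).symm

end TotalComplex

section Homology
variable {k M N : Type*} [CommRing k] [AddCommGroup M] [Module k M] [AddCommGroup N] [Module k N]

/-- The map `ι` induces a bijection from the homology of `(N, d₀)` to that of `(M, d)`. -/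
def InducesHomologyIso (d₀ : N →ₗ[k] N) (d : M →ₗ[k] M) (ι : N →ₗ[k] M) : Prop :=
  (∀ x, d x = 0 → ∃ w, d₀ w = 0 ∧ ∃ y, ι w - x = d y) ∧
    ∀ w, d₀ w = 0 → (∃ y, ι w = d y) → ∃ z, w = d₀ z

/-- The endomorphism `L` of `M` restricts to a bijection of the kernel of `π` onto itself. -/
def IsBijectiveOnKer (L : M →ₗ[k] M) (π : M →ₗ[k] N) : Prop :=
  ∀ x, π x = 0 → ∃! u, π u = 0 ∧ L u = x

theorem inducesHomologyIso_of_homotopy {d₀ : N →ₗ[k] N} {d : M →ₗ[k] M} {ι : N →ₗ[k] M}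
    {π : M →ₗ[k] N} {H L : M →ₗ[k] M} (hπι : π ∘ₗ ι = LinearMap.id) (hι : d ∘ₗ ι = ι ∘ₗ d₀)
    (hπ : d₀ ∘ₗ π = π ∘ₗ d) (hLd : L ∘ₗ d = d ∘ₗ L) (hH : d ∘ₗ H + H ∘ₗ d = L)
    (hL : IsBijectiveOnKer L π) : InducesHomologyIso d₀ d ι := by
  replace hπι (w : N) : π (ι w) = w := LinearMap.congr_fun hπι w
  replace hι (w : N) : d (ι w) = ι (d₀ w) := LinearMap.congr_fun hι w
  replace hπ (x : M) : d₀ (π x) = π (d x) := LinearMap.congr_fun hπ x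
  refine ⟨fun x hx => ⟨π x, by rw [hπ, hx, map_zero], ?_⟩, fun w _ ⟨y, hy⟩ => ⟨π y, ?_⟩⟩
  · obtain ⟨u, ⟨hπu, hLu⟩, -⟩ := hL (x - ι (π x)) (by rw [map_sub, hπι, sub_self])
    have hLdu : L (d u) = 0 := by
      rw [← LinearMap.comp_apply, hLd, LinearMap.comp_apply, hLu, map_sub, hι, hπ, hx]
      simp
    have hdu : d u = 0 :=
      (hL 0 (map_zero π)).unique ⟨by rw [← hπ, hπu, map_zero], hLdu⟩ ⟨map_zero π, map_zero L⟩
    have boundary : d (H u) = x - ι (π x) := by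
      rw [← hLu, ← hH, LinearMap.add_apply, LinearMap.comp_apply, LinearMap.comp_apply, hdu,
        map_zero, add_zero]
    exact ⟨-H u, by rw [map_neg, boundary, neg_sub]⟩
  · rw [hπ, ← hy, hπι]

theorem IsBijectiveOnKer.piMap {M N : ℕ → Type*} [∀ n, AddCommGroup (M n)] [∀ n, Module k (M n)]
    [∀ n, AddCommGroup (N n)] [∀ n, Module k (N n)] {L : ∀ n, M n →ₗ[k] M n}
    {π : ∀ n, M n →ₗ[k] N n} (h : ∀ n, IsBijectiveOnKer (L n) (π n)) :
    IsBijectiveOnKer (LinearMap.piMap L) (LinearMap.piMap π) := by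
  intro x hx
  choose u hu huniq using fun n => h n (x n) (congr_fun hx n)
  exact ⟨u, ⟨funext fun n => (hu n).1, funext fun n => (hu n).2⟩, fun v ⟨hπv, hLv⟩ =>
    funext fun n => huniq n (v n) ⟨congr_fun hπv n, congr_fun hLv n⟩⟩

/-- The sum of the eigenspaces of `L` of eigenvalue `1, 2, 3, …`. -/
def positiveEigenspace (L : Module.End k M) : Submodule k M :=
  ⨆ w : ℕ, L.eigenspace ((w + 1 : ℕ) : k)

section Rat
variable [Algebra ℚ k] {L : Module.End k M}

theorem positiveEigenspace_le_map :
    positiveEigenspace L ≤ (positiveEigenspace L).map L := by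
  refine iSup_le fun w x hx => ?_
  have scalar : (algebraMap ℚ k (w + 1 : ℕ)⁻¹) * ((w + 1 : ℕ) : k) = 1 := by
    rw [← map_natCast (algebraMap ℚ k), ← map_mul, inv_mul_cancel₀ (by positivity), map_one]
  refine ⟨algebraMap ℚ k (w + 1 : ℕ)⁻¹ • x,
    Submodule.smul_mem _ _ (Submodule.mem_iSup_of_mem w hx), ?_⟩
  rw [map_smul, Module.End.mem_eigenspace_iff.mp hx, smul_smul, scalar, one_smul]

theorem disjoint_ker_positiveEigenspace :
    Disjoint (LinearMap.ker L) (positiveEigenspace L) := by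
  let _ : Module ℚ M := Module.compHom M (algebraMap ℚ k)
  have : IsScalarTower ℚ k M := .of_algebraMap_smul fun _ _ => rfl
  let L' : Module.End ℚ M := L.restrictScalars ℚ
  have rational {x : M} (hx : x ∈ positiveEigenspace L) :
      x ∈ ⨆ (μ : ℚ) (_ : μ ≠ 0), L'.eigenspace μ := by
    refine Submodule.iSup_induction _ (motive := (· ∈ ⨆ (μ : ℚ) (_ : μ ≠ 0), L'.eigenspace μ)) hx
      (fun w y hy => ?_) (zero_mem _) fun y z => add_mem
    have hwy : L' y = ((w + 1 : ℕ) : ℚ) • y :=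
      (Module.End.mem_eigenspace_iff.mp hy).trans (by simp only [Nat.cast_smul_eq_nsmul])
    exact Submodule.mem_iSup_of_mem ((w + 1 : ℕ) : ℚ) <|
      Submodule.mem_iSup_of_mem (by positivity) (Module.End.mem_eigenspace_iff.mpr hwy)
  refine Submodule.disjoint_def.mpr fun x hx hpos => ?_
  exact Submodule.disjoint_def.mp (L'.eigenspaces_iSupIndep 0) x
    (Module.End.mem_eigenspace_iff.mpr (by rw [zero_smul]; exact hx)) (rational hpos)

theorem isBijectiveOnKer_of_mem_positiveEigenspace {L : M →ₗ[k] M} {ι : N →ₗ[k] M} {π : M →ₗ[k] N}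
    (hLι : L ∘ₗ ι = 0) (hπι : π ∘ₗ ι = LinearMap.id)
    (h : ∀ x, x - ι (π x) ∈ positiveEigenspace L) : IsBijectiveOnKer L π := by
  replace hLι (w : N) : L (ι w) = 0 := LinearMap.congr_fun hLι w
  replace hπι (w : N) : π (ι w) = w := LinearMap.congr_fun hπι w
  have mem_of_ker {x : M} (hx : π x = 0) : x ∈ positiveEigenspace L := by simpa [hx] using h x
  intro x hx
  obtain ⟨v, -, hv⟩ := positiveEigenspace_le_map (mem_of_ker hx)
  have hπu : π (v - ι (π v)) = 0 := by rw [map_sub, hπι, sub_self]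
  have hLu : L (v - ι (π v)) = x := by rw [map_sub, hLι, sub_zero, hv]
  refine ⟨v - ι (π v), ⟨hπu, hLu⟩, fun u ⟨hπu', hLu'⟩ => sub_eq_zero.mp ?_⟩
  exact Submodule.disjoint_def.mp disjoint_ker_positiveEigenspace _
    (by rw [LinearMap.mem_ker, map_sub, hLu, hLu', sub_self])
    (mem_of_ker (by rw [map_sub, hπu, hπu', sub_self]))

end Rat
end Homology

section PeriodicComplex

/-- The family with even members `x` and odd members `y`. -/
def interleave {M : ℕ → Type*} (x : ∀ n, M (2 * n)) (y : ∀ n, M (2 * n + 1)) (n : ℕ) : M n :=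
  n.bitCasesOn fun
    | false, n => x n
    | true, n => y n

section
variable {M : ℕ → Type*} (x : ∀ n, M (2 * n)) (y : ∀ n, M (2 * n + 1)) (n : ℕ)

theorem interleave_even : interleave x y (2 * n) = x n := Nat.bitCasesOn_bit0 _ n

theorem interleave_odd : interleave x y (2 * n + 1) = y n := Nat.bitCasesOn_bit1 _ n

end

variable {k A A' : Type*} [CommRing k] [Ring A] [Algebra k A] [Ring A'] [Algebra k A']
  {b : ∀ n, CycChain k A (n + 1) →ₗ[k] CycChain k A n}
  {B : ∀ n, CycChain k A n →ₗ[k] CycChain k A (n + 1)}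
  {b' : ∀ n, CycChain k A' (n + 1) →ₗ[k] CycChain k A' n}
  {B' : ∀ n, CycChain k A' n →ₗ[k] CycChain k A' (n + 1)}

theorem totalMap_eq_iff {x z : ∀ n, CycChain k A n} : totalMap b B z = x ↔
    (∀ n, dOE b B (fun n => z (2 * n + 1)) n = x (2 * n)) ∧
      ∀ n, dEO b B (fun n => z (2 * n)) n = x (2 * n + 1) := by
  have even (n : ℕ) : totalMap b B z (2 * n) = dOE b B (fun n => z (2 * n + 1)) n := by
    cases n <;> rfl
  refine ⟨fun h => ⟨fun n => (even n).symm.trans (congr_fun h _), fun n => congr_fun h (2 * n + 1)⟩,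
    fun ⟨hOE, hEO⟩ => funext fun n => ?_⟩
  obtain ⟨m, rfl | rfl⟩ := n.even_or_odd'
  exacts [(even m).trans (hOE m), hEO m]

/-- The map `ι` induces an isomorphism on periodic cyclic homology: it is bijective on the even and
the odd homology of the periodic cyclic complexes. -/
def InducesHPIso (b : ∀ n, CycChain k A (n + 1) →ₗ[k] CycChain k A n)
    (B : ∀ n, CycChain k A n →ₗ[k] CycChain k A (n + 1))
    (b' : ∀ n, CycChain k A' (n + 1) →ₗ[k] CycChain k A' n)
    (B' : ∀ n, CycChain k A' n →ₗ[k] CycChain k A' (n + 1))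
    (ι : ∀ n, CycChain k A n →ₗ[k] CycChain k A' n) : Prop :=
  (∀ x, (∀ n, dEO b' B' x n = 0) → ∃ w, (∀ n, dEO b B w n = 0) ∧
    ∃ y, ∀ n, ι (2 * n) (w n) - x n = dOE b' B' y n) ∧
  (∀ w, (∀ n, dEO b B w n = 0) → (∃ y, ∀ n, ι (2 * n) (w n) = dOE b' B' y n) →
    ∃ z, ∀ n, w n = dOE b B z n) ∧
  (∀ x, (∀ n, dOE b' B' x n = 0) → ∃ w, (∀ n, dOE b B w n = 0) ∧
    ∃ y, ∀ n, ι (2 * n + 1) (w n) - x n = dEO b' B' y n) ∧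
  (∀ w, (∀ n, dOE b B w n = 0) → (∃ y, ∀ n, ι (2 * n + 1) (w n) = dEO b' B' y n) →
    ∃ z, ∀ n, w n = dEO b B z n)

theorem InducesHomologyIso.inducesHPIso {ι : ∀ n, CycChain k A n →ₗ[k] CycChain k A' n}
    (h : InducesHomologyIso (totalMap b B) (totalMap b' B') (LinearMap.piMap ι)) :
    InducesHPIso b B b' B' ι := by
  have zero : ∀ n, dOE b B (fun _ => 0) n = 0 := (totalMap_eq_iff.mp (map_zero (totalMap b B))).1
  have zero' : ∀ n, dOE b' B' (fun _ => 0) n = 0 :=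
    (totalMap_eq_iff.mp (map_zero (totalMap b' B'))).1
  refine ⟨fun x hx => ?_, fun w hw ⟨y, hy⟩ => ?_, fun x hx => ?_, fun w hw ⟨y, hy⟩ => ?_⟩
  · obtain ⟨w, hw, y, hy⟩ := h.1 (interleave x fun _ => 0) (totalMap_eq_iff.mpr
      (by simpa [interleave_even, interleave_odd, zero'] using hx))
    exact ⟨fun n => w (2 * n), (totalMap_eq_iff.mp hw).2, fun n => y (2 * n + 1), fun n => by
      simpa [interleave_even] using ((totalMap_eq_iff.mp hy.symm).1 n).symm⟩
  · obtain ⟨z, hz⟩ := h.2 (interleave w fun _ => 0) (totalMap_eq_iff.mpr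
      (by simpa [interleave_even, interleave_odd, zero] using hw))
      ⟨interleave (fun _ => 0) y, Eq.symm (totalMap_eq_iff.mpr
        (by simpa [interleave_even, interleave_odd, dEO, eq_comm] using hy))⟩
    exact ⟨fun n => z (2 * n + 1), fun n => by
      simpa [interleave_even] using ((totalMap_eq_iff.mp hz.symm).1 n).symm⟩
  · obtain ⟨w, hw, y, hy⟩ := h.1 (interleave (fun _ => 0) x) (totalMap_eq_iff.mpr
      (by simpa [interleave_even, interleave_odd, dEO] using hx))
    exact ⟨fun n => w (2 * n + 1), (totalMap_eq_iff.mp hw).1, fun n => y (2 * n), fun n => by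
      simpa [interleave_odd] using ((totalMap_eq_iff.mp hy.symm).2 n).symm⟩
  · obtain ⟨z, hz⟩ := h.2 (interleave (fun _ => 0) w) (totalMap_eq_iff.mpr
      (by simpa [interleave_even, interleave_odd, dEO] using hw))
      ⟨interleave y fun _ => 0, Eq.symm (totalMap_eq_iff.mpr
        (by simpa [interleave_even, interleave_odd, zero', eq_comm] using hy))⟩
    exact ⟨fun n => z (2 * n), fun n => by
      simpa [interleave_odd] using ((totalMap_eq_iff.mp hz.symm).2 n).symm⟩

end PeriodicComplex

section Functoriality
variable {k A A' : Type*} [CommRing k] [Ring A'] [Algebra k A'] [Ring A] [Algebra k A]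

/-- The chain map `C_n(A) → C_n(A')` induced by a homomorphism `φ : A → A'`, extended to `A₊ → A'₊`
by `e ↦ e`. -/
noncomputable def map (φ : A →ₙₐ[k] A') (n : ℕ) : CycChain k A n →ₗ[k] CycChain k A' n :=
  TensorProduct.map (Unitization.lift ((Unitization.inrNonUnitalAlgHom k A').comp φ)).toLinearMap
    (PiTensorProduct.map fun _ => (φ : A →ₗ[k] A'))

variable {φ : A →ₙₐ[k] A'} {n : ℕ}

theorem map_tensorChain (g : ℕ → A) : map φ n (tensorChain k n g) = tensorChain k n (φ ∘ g) := by
  simp [map, tensorChain, elemC, PiTensorProduct.map_tprod]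

theorem map_oneChain (g : ℕ → A) : map φ n (oneChain k n g) = oneChain k n (φ ∘ g) := by
  simp [map, oneChain, elemC, PiTensorProduct.map_tprod]

theorem map_comp_map_eq_id {ψ : A' →ₙₐ[k] A} (h : ∀ a, ψ (φ a) = a) :
    map ψ n ∘ₗ map φ n = LinearMap.id := by
  have comp (g : ℕ → A) : ψ ∘ φ ∘ g = g := funext fun i => h (g i)
  refine hom_ext (fun g => ?_) fun g => ?_
  · simp only [LinearMap.comp_apply, map_tensorChain, comp, LinearMap.id_apply]
  · simp only [LinearMap.comp_apply, map_oneChain, comp, LinearMap.id_apply]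

variable {b : ∀ n, CycChain k A (n + 1) →ₗ[k] CycChain k A n}
  {b' : ∀ n, CycChain k A' (n + 1) →ₗ[k] CycChain k A' n}
  {B : ∀ n, CycChain k A n →ₗ[k] CycChain k A (n + 1)}
  {B' : ∀ n, CycChain k A' n →ₗ[k] CycChain k A' (n + 1)}

theorem comp_mulAt (q : ℕ) (g : ℕ → A) : φ ∘ mulAt q g = mulAt q (φ ∘ g) := by
  funext i
  simp only [Function.comp_apply, mulAt]
  split_ifs <;> simp

theorem comp_rotate (N j : ℕ) (g : ℕ → A) : φ ∘ rotate N j g = rotate N j (φ ∘ g) := by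
  funext i
  simp only [Function.comp_apply, rotate]
  split_ifs <;> rfl

theorem comp_face (N q : ℕ) (g : ℕ → A) : φ ∘ face N q g = face N q (φ ∘ g) := by
  by_cases h : q < N
  · simp only [face, if_pos h, comp_mulAt]
  · simp only [face, if_neg h, cyclicMul, Function.comp_update, map_mul, Function.comp_apply]

theorem hochschild_comp_map (hb : IsHochschildBoundary b) (hb' : IsHochschildBoundary b') (n : ℕ) :
    b' n ∘ₗ map φ (n + 1) = map φ n ∘ₗ b n := by
  refine hom_ext (fun g => ?_) fun g => ?_
  · simp only [LinearMap.comp_apply, map_tensorChain, hb.apply_tensorChain, hb'.apply_tensorChain,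
      map_sum, map_zsmul, comp_face]
  · simp only [LinearMap.comp_apply, map_tensorChain, map_oneChain, hb.apply_oneChain,
      hb'.apply_oneChain, map_sub, map_sum, map_zsmul, comp_mulAt, comp_rotate]

theorem connes_comp_map (hB : IsConnesOperator B) (hB' : IsConnesOperator B') (n : ℕ) :
    B' n ∘ₗ map φ n = map φ (n + 1) ∘ₗ B n := by
  refine hom_ext (fun g => ?_) fun g => ?_
  · simp only [LinearMap.comp_apply, map_tensorChain, map_oneChain, hB.apply_tensorChain,
      hB'.apply_tensorChain, map_sum, map_zsmul, comp_rotate]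
  · simp only [LinearMap.comp_apply, map_oneChain, hB.apply_oneChain, hB'.apply_oneChain, map_zero]

theorem lieDerivative_comp_map_eq_zero {D : A' →ₗ[k] A'} (h : ∀ a, D (φ a) = 0) :
    lieDerivative D n ∘ₗ map φ n = 0 := by
  have vanish {Φ : (ℕ → A') → CycChain k A' n} {l : ℕ} (hΦ : SlotAdditive Φ l) (g : ℕ → A) :
      Φ (derivAt D l (φ ∘ g)) = 0 :=
    hΦ.eq_zero (by simp [derivAt, h])
  refine hom_ext (fun g => ?_) fun g => ?_
  · rw [LinearMap.comp_apply, map_tensorChain, lieDerivative_tensorChain]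
    exact sum_eq_zero fun l hl =>
      vanish (slotAdditive_tensorChain (Nat.lt_succ_iff.mp (mem_range.mp hl))) g
  · rw [LinearMap.comp_apply, map_oneChain, lieDerivative_oneChain]
    exact sum_eq_zero fun l hl => vanish (slotAdditive_oneChain (mem_range.mp hl)) g

end Functoriality

section Grading
variable {k A : Type*} [CommRing k] [Ring A] [Algebra k A] (𝒜 : ℕ → Submodule k A)

/-- The grading derivation `D`, which is multiplication by `n` on `𝒜 n`. -/
noncomputable def gradingDerivation [GradedAlgebra 𝒜] : A →ₗ[k] A :=
  DirectSum.toModule k ℕ A (fun n => (n : k) • (𝒜 n).subtype) ∘ₗ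
    (DirectSum.decomposeLinearEquiv 𝒜).toLinearMap

/-- The projection of `A` onto its part of degree `0`. It is multiplicative because the degrees are
nonnegative. -/
noncomputable def degZeroProj [GradedAlgebra 𝒜] : A →ₙₐ[k] degZeroSubalgebra 𝒜 where
  toFun a := ⟨GradedRing.projZeroRingHom 𝒜 a, (DirectSum.decompose 𝒜 a 0).2⟩
  map_smul' r a := Subtype.ext (map_smul (GradedAlgebra.proj 𝒜 0) r a)
  map_zero' := Subtype.ext (map_zero (GradedRing.projZeroRingHom 𝒜))
  map_add' a b := Subtype.ext (map_add (GradedRing.projZeroRingHom 𝒜) a b)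
  map_mul' a b := Subtype.ext (map_mul (GradedRing.projZeroRingHom 𝒜) a b)

variable {𝒜}

theorem mem_of_forall_homogeneous {M : Type*} [AddGroup M] [DirectSum.Decomposition 𝒜] {N : ℕ}
    {Φ : (ℕ → A) → M} {S : AddSubmonoid M} (hΦ : ∀ q < N, SlotAdditive Φ q)
    (h : ∀ g, (∀ i < N, SetLike.IsHomogeneousElem 𝒜 (g i)) → Φ g ∈ S) (g : ℕ → A) : Φ g ∈ S := by
  suffices ∀ m ≤ N, ∀ g, (∀ i < N, m ≤ i → SetLike.IsHomogeneousElem 𝒜 (g i)) → Φ g ∈ S from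
    this N le_rfl g fun i hi hNi => absurd hi hNi.not_gt
  intro m hm
  induction m with
  | zero => exact fun g hg => h g fun i hi => hg i hi i.zero_le
  | succ m ih =>
    intro g hg
    rw [← Function.update_eq_self m g]
    refine DirectSum.Decomposition.inductionOn 𝒜
      (motive := fun a => Φ (Function.update g m a) ∈ S) ?_ (fun {d} a => ?_) (fun a b ha hb => ?_)
      (g m)
    · rw [(hΦ m hm).eq_zero (Function.update_self m 0 g)]
      exact zero_mem S
    · refine ih (by omega) _ fun i hi hmi => ?_
      rcases hmi.eq_or_lt with rfl | hlt
      · rw [Function.update_self]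
        exact ⟨d, a.2⟩
      · rw [Function.update_of_ne hlt.ne']
        exact hg i hi hlt
    · rw [hΦ m hm]
      exact add_mem ha hb

variable [GradedAlgebra 𝒜]

theorem gradingDerivation_of_mem {n : ℕ} {a : A} (ha : a ∈ 𝒜 n) :
    gradingDerivation 𝒜 a = n • a := by
  rw [gradingDerivation, LinearMap.comp_apply, LinearEquiv.coe_coe,
    DirectSum.decomposeLinearEquiv_apply, DirectSum.decompose_of_mem 𝒜 ha]
  erw [DirectSum.toModule_lof]
  simp [Nat.cast_smul_eq_nsmul]

theorem isLeibniz_gradingDerivation : IsLeibniz (gradingDerivation 𝒜) := by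
  intro a b
  induction a using DirectSum.Decomposition.inductionOn 𝒜 with
  | zero => simp
  | add a a' ha ha' => rw [add_mul, map_add, map_add, ha, ha', add_mul, add_mul]; abel
  | @homogeneous i a =>
    induction b using DirectSum.Decomposition.inductionOn 𝒜 with
    | zero => simp
    | add b b' hb hb' => rw [mul_add, map_add, map_add, hb, hb', mul_add, mul_add]; abel
    | @homogeneous j b =>
      rw [gradingDerivation_of_mem (SetLike.mul_mem_graded a.2 b.2), gradingDerivation_of_mem a.2,
        gradingDerivation_of_mem b.2, add_nsmul, smul_mul_assoc, mul_smul_comm]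

theorem coe_degZeroProj_of_mem {a : A} (ha : a ∈ 𝒜 0) : (degZeroProj 𝒜 a : A) = a :=
  DirectSum.decompose_of_mem_same 𝒜 ha

theorem degZeroProj_of_mem_ne {n : ℕ} {a : A} (ha : a ∈ 𝒜 n) (hn : n ≠ 0) :
    degZeroProj 𝒜 a = 0 :=
  Subtype.ext (DirectSum.decompose_of_mem_ne 𝒜 ha hn)

theorem degZeroProj_coe (a : degZeroSubalgebra 𝒜) : degZeroProj 𝒜 a = a :=
  Subtype.ext (coe_degZeroProj_of_mem a.2)

section Weight
variable {M : Type*} [AddCommGroup M] [Module k M] {L : Module.End k M} {Φ : (ℕ → A) → M} {N : ℕ}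

theorem apply_eq_sum_degree_smul {d : ℕ → ℕ} {g : ℕ → A} (hΦ : ∀ q < N, SlotAdditive Φ q)
    (hL : L (Φ g) = ∑ l ∈ range N, Φ (derivAt (gradingDerivation 𝒜) l g))
    (hg : ∀ i < N, g i ∈ 𝒜 (d i)) : L (Φ g) = (∑ l ∈ range N, d l) • Φ g := by
  rw [hL, sum_smul]
  refine sum_congr rfl fun l hl => ?_
  have hl := mem_range.mp hl
  rw [derivAt, gradingDerivation_of_mem (hg l hl), (hΦ l hl).map_update_nsmul,
    Function.update_eq_self]

theorem sub_degZeroProj_mem_positiveEigenspace (hΦ : ∀ q < N, SlotAdditive Φ q)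
    (hΦN : DependsOn Φ (Set.Iio N))
    (hL : ∀ g, L (Φ g) = ∑ l ∈ range N, Φ (derivAt (gradingDerivation 𝒜) l g)) (g : ℕ → A) :
    Φ g - Φ (fun i => (degZeroProj 𝒜 (g i) : A)) ∈ positiveEigenspace L := by
  have additive (q : ℕ) (hq : q < N) :
      SlotAdditive (fun g : ℕ → A => Φ g - Φ (fun i => (degZeroProj 𝒜 (g i) : A))) q := by
    intro g x y
    have proj_update (z : A) : (fun i => (degZeroProj 𝒜 (Function.update g q z i) : A)) =
        Function.update (fun i => (degZeroProj 𝒜 (g i) : A)) q (degZeroProj 𝒜 z) :=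
      funext fun i => Function.apply_update (fun _ a => (degZeroProj 𝒜 a : A)) g q z i
    simp only [proj_update, map_add, Subalgebra.coe_add, hΦ q hq _ _ _]
    abel
  refine mem_of_forall_homogeneous (𝒜 := 𝒜) (S := (positiveEigenspace L).toAddSubmonoid) additive
    (fun g hg => ?_) g
  choose! d hd using hg
  by_cases hd0 : ∀ i < N, d i = 0
  · have fixed : Φ (fun i => (degZeroProj 𝒜 (g i) : A)) = Φ g :=
      hΦN fun i hi => coe_degZeroProj_of_mem (hd0 i hi ▸ hd i hi)
    rw [fixed, sub_self]
    exact zero_mem _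
  · push Not at hd0
    obtain ⟨i, hi, hdi⟩ := hd0
    have killed : Φ (fun i => (degZeroProj 𝒜 (g i) : A)) = 0 :=
      (hΦ i hi).eq_zero (by simp [degZeroProj_of_mem_ne (hd i hi) hdi])
    obtain ⟨w, hw⟩ : ∃ w, ∑ l ∈ range N, d l = w + 1 := Nat.exists_eq_succ_of_ne_zero fun h =>
      hdi (sum_eq_zero_iff.mp h i (mem_range.mpr hi))
    rw [killed, sub_zero]
    exact Submodule.mem_iSup_of_mem w <| Module.End.mem_eigenspace_iff.mpr <| by
      rw [apply_eq_sum_degree_smul hΦ (hL g) hd, hw, Nat.cast_smul_eq_nsmul]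

end Weight

theorem sub_map_degZeroProj_mem_positiveEigenspace (n : ℕ) (x : CycChain k A n) :
    x - map (NonUnitalSubalgebraClass.subtype (degZeroSubalgebra 𝒜)) n
        (map (degZeroProj 𝒜) n x) ∈
      positiveEigenspace (lieDerivative (gradingDerivation 𝒜) n) := by
  let S := positiveEigenspace (lieDerivative (gradingDerivation 𝒜) n)
  suffices S.mkQ = S.mkQ ∘ₗ map (NonUnitalSubalgebraClass.subtype (degZeroSubalgebra 𝒜)) n ∘ₗ
      map (degZeroProj 𝒜) n from
    (Submodule.Quotient.eq S).mp (LinearMap.congr_fun this x)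
  refine hom_ext (fun g => (Submodule.Quotient.eq S).mpr ?_)
    fun g => (Submodule.Quotient.eq S).mpr ?_
  · rw [LinearMap.comp_apply, map_tensorChain, map_tensorChain]
    exact sub_degZeroProj_mem_positiveEigenspace (Φ := tensorChain k n)
      (fun q hq => slotAdditive_tensorChain (Nat.lt_succ_iff.mp hq)) dependsOn_tensorChain
      lieDerivative_tensorChain g
  · rw [LinearMap.comp_apply, map_oneChain, map_oneChain]
    exact sub_degZeroProj_mem_positiveEigenspace (Φ := oneChain k n)
      (fun q hq => slotAdditive_oneChain hq) dependsOn_oneChain lieDerivative_oneChain g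

theorem isBijectiveOnKer_lieDerivative_gradingDerivation [Algebra ℚ k] (n : ℕ) :
    IsBijectiveOnKer (lieDerivative (gradingDerivation 𝒜) n)
      (map (degZeroProj 𝒜) n) :=
  isBijectiveOnKer_of_mem_positiveEigenspace
    (lieDerivative_comp_map_eq_zero fun a => by
      simpa using gradingDerivation_of_mem (𝒜 := 𝒜) (n := 0) a.2)
    (map_comp_map_eq_id degZeroProj_coe) (sub_map_degZeroProj_mem_positiveEigenspace n)

theorem eq_map_subtype {S : Subalgebra k A} {n : ℕ} {ι : CycChain k S n →ₗ[k] CycChain k A n}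
    (h : ∀ a (f : ℕ → S), ι (elemC k S n a f) =
      elemC k A n (unitizationIncl S a) fun i => (f i : A)) :
    ι = map (NonUnitalSubalgebraClass.subtype S) n := by
  refine hom_ext_elemC fun a f => ?_
  rw [h]
  simp [map, elemC, unitizationIncl, PiTensorProduct.map_tprod, Unitization.algebraMap_eq_inl]

end Grading

section Retract
variable {k A A' : Type*} [CommRing k] [Ring A] [Algebra k A] [Ring A'] [Algebra k A']
  {b : ∀ n, CycChain k A (n + 1) →ₗ[k] CycChain k A n}
  {B : ∀ n, CycChain k A n →ₗ[k] CycChain k A (n + 1)} {D : A →ₗ[k] A}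

theorem cartan_homotopy (hb : IsHochschildBoundary b) (hB : IsConnesOperator B)
    (hD : IsLeibniz D) :
    totalMap b B ∘ₗ totalMap (contraction D) (cyclicContraction D) +
        totalMap (contraction D) (cyclicContraction D) ∘ₗ totalMap b B =
      LinearMap.piMap (lieDerivative D) :=
  totalMap_comp_add_comp (hochschild_comp_contraction hb hD)
    (fun n => by rw [connes_comp_cyclicContraction hB, cyclicContraction_comp_connes hB, add_zero])
    (cartan_zero hb hB) (cartan_succ hb hB hD)

theorem inducesHPIso_of_isBijectiveOnKer_lieDerivative
    {b' : ∀ n, CycChain k A' (n + 1) →ₗ[k] CycChain k A' n}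
    {B' : ∀ n, CycChain k A' n →ₗ[k] CycChain k A' (n + 1)} {φ : A' →ₙₐ[k] A} {ψ : A →ₙₐ[k] A'}
    (hb : IsHochschildBoundary b) (hB : IsConnesOperator B) (hb' : IsHochschildBoundary b')
    (hB' : IsConnesOperator B') (hψφ : ∀ a, ψ (φ a) = a) (hD : IsLeibniz D)
    (hL : ∀ n, IsBijectiveOnKer (lieDerivative D n) (map ψ n)) :
    InducesHPIso b' B' b B (map φ) := by
  refine (inducesHomologyIso_of_homotopy (π := LinearMap.piMap (map ψ)) ?_ ?_ ?_ ?_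
    (cartan_homotopy hb hB hD) (.piMap hL)).inducesHPIso
  · exact LinearMap.ext fun x => funext fun n => LinearMap.congr_fun (map_comp_map_eq_id hψφ) (x n)
  · exact totalMap_comp_piMap (hochschild_comp_map hb' hb) (connes_comp_map hB' hB)
  · exact totalMap_comp_piMap (hochschild_comp_map hb hb') (connes_comp_map hB hB')
  · exact (totalMap_comp_piMap (fun n => (lieDerivative_comp_hochschild hb hD n).symm)
      fun n => (lieDerivative_comp_connes hB n).symm).symm

end Retract

end CycChain

open CycChain in
theorem stmt13_general {k A : Type*} [CommRing k] [Algebra ℚ k] [Ring A] [Algebra k A]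
    (𝒜 : ℕ → Submodule k A) [GradedAlgebra 𝒜]
    {b : ∀ n, CycChain k A (n + 1) →ₗ[k] CycChain k A n}
    {B : ∀ n, CycChain k A n →ₗ[k] CycChain k A (n + 1)}
    (hb : IsHochschildBoundary b) (hB : IsConnesOperator B)
    {b₀ : ∀ n, CycChain k (degZeroSubalgebra 𝒜) (n + 1) →ₗ[k] CycChain k (degZeroSubalgebra 𝒜) n}
    {B₀ : ∀ n, CycChain k (degZeroSubalgebra 𝒜) n →ₗ[k] CycChain k (degZeroSubalgebra 𝒜) (n + 1)}
    (hb₀ : IsHochschildBoundary b₀) (hB₀ : IsConnesOperator B₀)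
    {ι : ∀ n, CycChain k (degZeroSubalgebra 𝒜) n →ₗ[k] CycChain k A n}
    (hι : ∀ n a (f : ℕ → degZeroSubalgebra 𝒜), ι n (elemC k (degZeroSubalgebra 𝒜) n a f) =
      elemC k A n (unitizationIncl (degZeroSubalgebra 𝒜) a) fun i => (f i : A)) :
    InducesHPIso b₀ B₀ b B ι := by
  obtain rfl : ι = map (NonUnitalSubalgebraClass.subtype (degZeroSubalgebra 𝒜)) :=
    funext fun n => eq_map_subtype (hι n)
  exact inducesHPIso_of_isBijectiveOnKer_lieDerivative hb hB hb₀ hB₀ degZeroProj_coe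
    isLeibniz_gradingDerivation isBijectiveOnKer_lieDerivative_gradingDerivation

/-- Let `A = ⊕_{n≥0} A_n` be a nonnegatively graded algebra over a field of
characteristic `0`, `A₀` its degree-zero part.  Then the inclusion `A₀ → A` induces an
isomorphism `HP_•(A₀) ≅ HP_•(A)` on periodic cyclic homology.  Here the periodic cyclic
complexes are the `ℤ/2`-graded complexes `(Π_n C_{2n}, Π_n C_{2n+1}, b + B)`, where the `b`
and `B` operators (hypothesized as linear maps, and uniquely determined by their standard
values on elementary tensors) and the chain map `ι` induced by the inclusion are given;
the conclusion asserts bijectivity of `ι` on even and odd homology. -/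
theorem stmt13 {k A : Type*} [Field k] [CharZero k] [Ring A] [Algebra k A]
    (𝒜 : ℕ → Submodule k A) [GradedAlgebra 𝒜]
    -- the operators b, B of the cyclic complex of A
    (bA : ∀ n : ℕ, CycChain k A (n + 1) →ₗ[k] CycChain k A n)
    (BA : ∀ n : ℕ, CycChain k A n →ₗ[k] CycChain k A (n + 1))
    (hbA : ∀ (n : ℕ) (a₀ : Unitization k A) (f : ℕ → A),
      bA n (elemC k A (n + 1) a₀ f) = bElemF k A n a₀ f)
    (hBA : ∀ (n : ℕ) (a₀ : Unitization k A) (f : ℕ → A),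
      BA n (elemC k A n a₀ f) = BElemF k A n a₀ f)
    -- the operators b, B of the cyclic complex of A₀
    (b0 : ∀ n : ℕ, CycChain k (degZeroSubalgebra 𝒜) (n + 1) →ₗ[k]
      CycChain k (degZeroSubalgebra 𝒜) n)
    (B0 : ∀ n : ℕ, CycChain k (degZeroSubalgebra 𝒜) n →ₗ[k]
      CycChain k (degZeroSubalgebra 𝒜) (n + 1))
    (hb0 : ∀ (n : ℕ) (a₀ : Unitization k (degZeroSubalgebra 𝒜))
        (f : ℕ → (degZeroSubalgebra 𝒜)),
      b0 n (elemC k (degZeroSubalgebra 𝒜) (n + 1) a₀ f)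
        = bElemF k (degZeroSubalgebra 𝒜) n a₀ f)
    (hB0 : ∀ (n : ℕ) (a₀ : Unitization k (degZeroSubalgebra 𝒜))
        (f : ℕ → (degZeroSubalgebra 𝒜)),
      B0 n (elemC k (degZeroSubalgebra 𝒜) n a₀ f)
        = BElemF k (degZeroSubalgebra 𝒜) n a₀ f)
    -- the chain map induced by the inclusion A₀ → A
    (ι : ∀ n : ℕ, CycChain k (degZeroSubalgebra 𝒜) n →ₗ[k] CycChain k A n)
    (hι : ∀ (n : ℕ) (a₀ : Unitization k (degZeroSubalgebra 𝒜))
        (f : ℕ → (degZeroSubalgebra 𝒜)),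
      ι n (elemC k (degZeroSubalgebra 𝒜) n a₀ f)
        = elemC k A n (unitizationIncl (degZeroSubalgebra 𝒜) a₀) (fun i => (f i : A))) :
    -- even surjectivity
    (∀ x : ∀ n : ℕ, CycChain k A (2 * n), (∀ n, dEO bA BA x n = 0) →
      ∃ w : ∀ n : ℕ, CycChain k (degZeroSubalgebra 𝒜) (2 * n),
        (∀ n, dEO b0 B0 w n = 0) ∧
        ∃ y : ∀ n : ℕ, CycChain k A (2 * n + 1),
          ∀ n, ι (2 * n) (w n) - x n = dOE bA BA y n) ∧
    -- even injectivity
    (∀ w : ∀ n : ℕ, CycChain k (degZeroSubalgebra 𝒜) (2 * n), (∀ n, dEO b0 B0 w n = 0) →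
      (∃ y : ∀ n : ℕ, CycChain k A (2 * n + 1), ∀ n, ι (2 * n) (w n) = dOE bA BA y n) →
      ∃ z : ∀ n : ℕ, CycChain k (degZeroSubalgebra 𝒜) (2 * n + 1),
        ∀ n, w n = dOE b0 B0 z n) ∧
    -- odd surjectivity
    (∀ x : ∀ n : ℕ, CycChain k A (2 * n + 1), (∀ n, dOE bA BA x n = 0) →
      ∃ w : ∀ n : ℕ, CycChain k (degZeroSubalgebra 𝒜) (2 * n + 1),
        (∀ n, dOE b0 B0 w n = 0) ∧
        ∃ y : ∀ n : ℕ, CycChain k A (2 * n),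
          ∀ n, ι (2 * n + 1) (w n) - x n = dEO bA BA y n) ∧
    -- odd injectivity
    (∀ w : ∀ n : ℕ, CycChain k (degZeroSubalgebra 𝒜) (2 * n + 1),
      (∀ n, dOE b0 B0 w n = 0) →
      (∃ y : ∀ n : ℕ, CycChain k A (2 * n), ∀ n, ι (2 * n + 1) (w n) = dEO bA BA y n) →
      ∃ z : ∀ n : ℕ, CycChain k (degZeroSubalgebra 𝒜) (2 * n),
        ∀ n, w n = dEO b0 B0 z n) :=
  stmt13_general 𝒜 hbA hBA hb0 hB0 hι
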